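/- Let 0 < s < 1 and let the collision kernel b satisfy b(cos θ)·θ^{2+2s} → K as θ → 0+ for some K > 0. Let F₀ be a Borel probability measure on ℝ³ which is not a single Dirac mass and which has finite second moment ∫_{ℝ³} |v|² dF₀(v) < ∞, let ψ₀ be its characteristic function, and let ψ be a solution of the Fourier-transformed (Bobylev) homogeneous Boltzmann Cauchy problem with initial datum ψ₀, with t ↦ ψ(t,·) continuous into 𝒦². Then for EVERY t > 0 and every N ∈ ℕ one has ∫_{ℝ³} (1+|ξ|²)^N |ψ(t,ξ)|² dξ < ∞ (global-in-time H^∞ smoothing). -/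

import Mathlib

noncomputable section

open MeasureTheory Real Filter Metric Set
open scoped RealInnerProductSpace Topology

/-- ℝ³ as a Euclidean space. -/
abbrev E3 : Type := EuclideanSpace ℝ (Fin 3)

/-- The surface measure on the unit sphere S² ⊂ ℝ³. -/
def sphμ : Measure (sphere (0 : E3) 1) := (volume : Measure E3).toSphere

/-- The characteristic function (Fourier transform) of a Borel measure on ℝ³,
`ψ(ξ) = ∫ e^{-i v·ξ} dΨ(v)`. -/
def charFn (Ψ : Measure E3) (ξ : E3) : ℂ :=
  ∫ v, Complex.exp (-(Complex.I * (⟪v, ξ⟫ : ℂ))) ∂Ψ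

/-- `ψ` is a characteristic function of some Borel probability measure on ℝ³. -/
def IsCharFn (ψ : E3 → ℂ) : Prop :=
  ∃ Ψ : Measure E3, IsProbabilityMeasure Ψ ∧ ψ = charFn Ψ

/-- Finiteness of `‖φ - 1‖_α`, i.e. the quantitative part of membership in `𝒦^α`. -/
def KBdd (α : ℝ) (φ : E3 → ℂ) : Prop :=
  ∃ C : ℝ, ∀ ξ : E3, ξ ≠ 0 → ‖φ ξ - 1‖ ≤ C * ‖ξ‖ ^ α

/-- Membership in the space `𝒦^α`. -/
def memK (α : ℝ) (φ : E3 → ℂ) : Prop := IsCharFn φ ∧ KBdd α φ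

/-- The distance `‖φ - φ'‖_α = sup_{ξ ≠ 0} |φ(ξ) - φ'(ξ)|/|ξ|^α` on `𝒦^α`. -/
def Kdist (α : ℝ) (φ φ' : E3 → ℂ) : ℝ :=
  ⨆ ξ : {ξ : E3 // ξ ≠ 0}, ‖φ ξ.1 - φ' ξ.1‖ / ‖(ξ.1 : E3)‖ ^ α

/-- `ξ⁺ = ξ/2 + (|ξ|/2)σ`. -/
def xiPlus (ξ : E3) (σ : sphere (0 : E3) 1) : E3 := (1/2 : ℝ) • ξ + (‖ξ‖ / 2) • (σ : E3)

/-- `ξ⁻ = ξ/2 - (|ξ|/2)σ`. -/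
def xiMinus (ξ : E3) (σ : sphere (0 : E3) 1) : E3 := (1/2 : ℝ) • ξ - (‖ξ‖ / 2) • (σ : E3)

/-- The Bobylev collision integrand at time `t`, frequency `ξ`, direction `σ`. -/
def bobylevIntegrand (b : ℝ → ℝ) (ψ : ℝ → E3 → ℂ) (t : ℝ) (ξ : E3)
    (σ : sphere (0 : E3) 1) : ℂ :=
  (b (⟪ξ, (σ : E3)⟫ / ‖ξ‖) : ℂ) *
    (ψ t (xiPlus ξ σ) * ψ t (xiMinus ξ σ) - ψ t ξ)

/-- `ψ : [0,∞) × ℝ³ → ℂ` is a solution of the Fourier-transformed (Bobylev)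
homogeneous Boltzmann Cauchy problem with collision kernel `b` and initial datum `ψ₀`. -/
structure IsBobylevSolution (b : ℝ → ℝ) (ψ : ℝ → E3 → ℂ) (ψ₀ : E3 → ℂ) : Prop where
  cont : ContinuousOn (fun p : ℝ × E3 => ψ p.1 p.2) (Set.Ici 0 ×ˢ Set.univ)
  init : ψ 0 = ψ₀
  isCharFn : ∀ t ≥ 0, IsCharFn (ψ t)
  integrable : ∀ t ≥ 0, ∀ ξ : E3, Integrable (bobylevIntegrand b ψ t ξ) sphμ
  eq : ∀ t ≥ 0, ∀ ξ : E3, HasDerivWithinAt (fun τ => ψ τ ξ)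
      (∫ σ, bobylevIntegrand b ψ t ξ σ ∂sphμ) (Set.Ici 0) t

/-- Continuity of `t ↦ ψ(t,·)` from `[0,∞)` into the metric space `(𝒦^α, ‖·‖_α)`. -/
def KContinuous (α : ℝ) (ψ : ℝ → E3 → ℂ) : Prop :=
  ∀ t₀ ∈ Set.Ici (0:ℝ), Tendsto (fun t => Kdist α (ψ t) (ψ t₀)) (𝓝[Set.Ici (0:ℝ)] t₀) (𝓝 0)

/-- The angular singularity assumption `b(cos θ) θ^{2+2s} → K` as `θ → 0+`. -/
def KernelSingular (b : ℝ → ℝ) (s K : ℝ) : Prop :=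
  Tendsto (fun θ : ℝ => b (Real.cos θ) * θ ^ (2 + 2*s)) (𝓝[>] 0) (𝓝 K)

/-!
The function `p = |ψ|²` is the characteristic function of a symmetrized law, and Bobylev's equation
turns into the inequality `∂ₜp ≤ ∫ b (p(ξ⁺) p(ξ⁻) - p(ξ)) dσ`, so that `p` can be compared with
explicit barriers.

*`p < 1` persists away from the origin.* If `p(t, ·)` attains the value `1` at one nonzero
frequency, then it is identically `1`. If the weight `b(x)(1 - |x|)` is integrable on the sphere,
the barriers `1 - a|ξ|² + κ + a(m + 1)(τ - t₁)/2` on the unit ball exclude this on time steps of a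
fixed length. If it is not integrable near some angle, the convergence of the collision integral
forces `p(ξ⁺) p(ξ⁻) = p(ξ)` at that angle for all `ξ`; as `p` has a second-order expansion at the
origin, it is then a Gaussian, the collision integral vanishes, and `p` is nonincreasing in time.

*Smoothing.* Continuity into `𝒦²` upgrades `p < 1` to `p ≤ exp(-a|ξ|²)` on the unit ball, for all
times in some interval `[t₀, t]`. For `|ξ| ≥ 1`, `p` stays below
`exp(ε|ξ|² - k(τ - t₀) log(1 + δ|ξ|²))`: at a first contact, the nearly grazing collisions, those
with `|ξ⁻|` of order one, push `p` down at a relative rate `|ξ|^(2s)`, faster than the barrier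
moves. Since `k(t - t₀)` is arbitrary, `p(t, ·)` decays faster than any power.
-/

section Analysis

open Asymptotics

lemma integrable_of_tendsto_of_integral_le {α : Type*} {mα : MeasurableSpace α} {μ : Measure α}
    {f : ℕ → α → ℝ} {g : α → ℝ} {C : ℝ} (hf : ∀ n, Integrable (f n) μ) (hf0 : ∀ n x, 0 ≤ f n x)
    (hlim : ∀ x, Tendsto (fun n => f n x) atTop (𝓝 (g x))) (hC : ∀ n, ∫ x, f n x ∂μ ≤ C) :
    Integrable g μ := by
  have hg0 : ∀ x, 0 ≤ g x := fun x => ge_of_tendsto' (hlim x) fun n => hf0 n x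
  have hliminf : ∀ x, liminf (fun n => ENNReal.ofReal (f n x)) atTop = ENNReal.ofReal (g x) :=
    fun x => ((ENNReal.continuous_ofReal.tendsto _).comp (hlim x)).liminf_eq
  refine ⟨aestronglyMeasurable_of_tendsto_ae _ (fun n => (hf n).1) (ae_of_all _ hlim), ?_⟩
  rw [hasFiniteIntegral_iff_ofReal (ae_of_all _ hg0)]
  calc ∫⁻ x, ENNReal.ofReal (g x) ∂μ
      = ∫⁻ x, liminf (fun n => ENNReal.ofReal (f n x)) atTop ∂μ := by simp_rw [hliminf]
    _ ≤ liminf (fun n => ∫⁻ x, ENNReal.ofReal (f n x) ∂μ) atTop :=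
        lintegral_liminf_le' fun n => (hf n).1.aemeasurable.ennreal_ofReal
    _ ≤ ENNReal.ofReal C := liminf_le_of_le (by isBoundedDefault) fun B hB => by
        obtain ⟨n, hn⟩ := hB.exists
        refine hn.trans ?_
        rw [← ofReal_integral_eq_lintegral_ofReal (hf n) (ae_of_all _ (hf0 n))]
        exact ENNReal.ofReal_le_ofReal (hC n)
    _ < ⊤ := ENNReal.ofReal_lt_top

lemma isLittleO_one_sub_cos_sub_sq :
    (fun y : ℝ => 1 - cos y - y ^ 2 / 2) =o[𝓝 0] fun y => y ^ 2 := by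
  refine IsBigO.trans_isLittleO (g := fun y : ℝ => y ^ 4) ?_ (isLittleO_pow_pow (by norm_num))
  refine IsBigO.of_bound (5 / 96) ?_
  filter_upwards [Metric.closedBall_mem_nhds (0 : ℝ) one_pos] with y hy
  have hcos := cos_bound (x := y) (by simpa using hy)
  rw [abs_sub_comm, ← abs_pow, mul_comm] at hcos
  rwa [norm_eq_abs, norm_eq_abs, sub_right_comm]

end Analysis

section Symmetrization

variable {E : Type*} [NormedAddCommGroup E] [MeasurableSpace E]

/-- The law of the difference of two independent random variables with law `μ`. Its characteristic
function is the squared modulus of that of `μ`. -/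
def symmetrization (μ : Measure E) : Measure E := (μ.prod μ).map fun z => z.1 - z.2

variable [BorelSpace E] [SecondCountableTopology E] (μ : Measure E) [IsProbabilityMeasure μ]

instance : IsProbabilityMeasure (symmetrization μ) :=
  Measure.isProbabilityMeasure_map (by fun_prop)

lemma exists_singleton_of_symmetrization_eq_dirac (h : symmetrization μ = Measure.dirac 0) :
    ∃ v, μ {v} = 1 := by
  have hdiff : (μ.prod μ) {z | z.1 ≠ z.2} = 0 := by
    have h0 : symmetrization μ {0}ᶜ = 0 := by simp [h]
    rw [symmetrization, Measure.map_apply (by fun_prop) (by measurability)] at h0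
    convert h0 using 2
    ext z
    simp [sub_eq_zero]
  have hmeas : MeasurableSet {z : E × E | z.1 ≠ z.2} :=
    (isOpen_ne_fun continuous_fst continuous_snd).measurableSet
  obtain ⟨v, hv⟩ := ((Measure.measure_prod_null hmeas).1 hdiff).exists
  refine ⟨v, (prob_compl_eq_zero_iff (measurableSet_singleton v)).1 (Eq.trans ?_ hv)⟩
  congr 1
  ext w
  simp [eq_comm]

variable [InnerProductSpace ℝ E]

lemma charFun_symmetrization (ξ : E) :
    charFun (symmetrization μ) ξ = ((‖charFun μ ξ‖ ^ 2 : ℝ) : ℂ) := by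
  have hexp : ∀ z : E × E, Complex.exp (⟪z.1 - z.2, ξ⟫ * Complex.I)
      = Complex.exp (⟪z.1, ξ⟫ * Complex.I) * Complex.exp (⟪z.2, -ξ⟫ * Complex.I) := fun z => by
    rw [← Complex.exp_add, inner_sub_left, inner_neg_right]
    push_cast
    ring_nf
  rw [charFun_apply, symmetrization, integral_map (by fun_prop) (by fun_prop)]
  simp_rw [hexp]
  rw [integral_prod_mul (fun v : E => Complex.exp (⟪v, ξ⟫ * Complex.I))
      (fun v : E => Complex.exp (⟪v, -ξ⟫ * Complex.I)),
    ← charFun_apply, ← charFun_apply, charFun_neg, Complex.mul_conj, Complex.normSq_eq_norm_sq]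

lemma exists_singleton_of_norm_charFun_eq_one [CompleteSpace E]
    (h : ∀ ξ, ‖charFun μ ξ‖ = 1) : ∃ v, μ {v} = 1 := by
  refine exists_singleton_of_symmetrization_eq_dirac μ (Measure.ext_of_charFun ?_)
  ext ξ
  simp [charFun_symmetrization, h, charFun_dirac]

end Symmetrization

section RealCharFun

variable {E : Type*} [NormedAddCommGroup E] [InnerProductSpace ℝ E] [MeasurableSpace E]

/-- `p` is the characteristic function of a probability measure and is real-valued, such as
the squared modulus of a characteristic function. -/
def IsRealCharFun (p : E → ℝ) : Prop :=
  ∃ ν : Measure E, IsProbabilityMeasure ν ∧ ∀ ξ, charFun ν ξ = p ξ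

namespace IsRealCharFun

variable {p : E → ℝ}

lemma apply_zero (h : IsRealCharFun p) : p 0 = 1 := by
  obtain ⟨ν, _, hp⟩ := h
  have h1 : (p 0 : ℂ) = 1 := by rw [← hp, charFun_zero, probReal_univ, Complex.ofReal_one]
  exact_mod_cast h1

lemma abs_le_one (h : IsRealCharFun p) (ξ : E) : |p ξ| ≤ 1 := by
  obtain ⟨ν, _, hp⟩ := h
  simpa [hp ξ] using norm_charFun_le_one (μ := ν) ξ

lemma le_one (h : IsRealCharFun p) (ξ : E) : p ξ ≤ 1 := (le_abs_self _).trans (h.abs_le_one ξ)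

lemma neg (h : IsRealCharFun p) (ξ : E) : p (-ξ) = p ξ := by
  obtain ⟨ν, _, hp⟩ := h
  have hneg : (p (-ξ) : ℂ) = p ξ := by rw [← hp, charFun_neg, hp, Complex.conj_ofReal]
  exact_mod_cast hneg

variable [BorelSpace E] [SecondCountableTopology E]

lemma continuous (h : IsRealCharFun p) : Continuous p := by
  obtain ⟨ν, _, hp⟩ := h
  have : p = fun ξ => (charFun ν ξ).re := by ext ξ; simp [hp]
  rw [this]
  exact Complex.continuous_re.comp continuous_charFun

lemma integrable_cos_inner (ν : Measure E) [IsFiniteMeasure ν] (ξ : E) :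
    Integrable (fun v : E => cos ⟪v, ξ⟫) ν :=
  .of_bound (C := 1) (by fun_prop) (ae_of_all _ fun v => abs_cos_le_one ⟪v, ξ⟫)

lemma integrable_one_sub_cos_inner (ν : Measure E) [IsFiniteMeasure ν] (ξ : E) :
    Integrable (fun v : E => 1 - cos ⟪v, ξ⟫) ν :=
  (integrable_const 1).sub (integrable_cos_inner ν ξ)

lemma one_sub_eq_integral {ν : Measure E} [IsProbabilityMeasure ν]
    (hp : ∀ ξ, charFun ν ξ = p ξ) (ξ : E) : 1 - p ξ = ∫ v, (1 - cos ⟪v, ξ⟫) ∂ν := by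
  have hexp : Integrable (fun v : E => Complex.exp (⟪v, ξ⟫ * Complex.I)) ν :=
    .of_bound (C := 1) (by fun_prop)
      (ae_of_all _ fun v => by rw [Complex.norm_exp_ofReal_mul_I])
  have hre : p ξ = ∫ v, cos ⟪v, ξ⟫ ∂ν := by
    have h1 : ∫ v, (Complex.exp (⟪v, ξ⟫ * Complex.I)).re ∂ν = (charFun ν ξ).re :=
      integral_re hexp
    simpa [hp, Complex.exp_ofReal_mul_I_re] using h1.symm
  rw [hre, integral_sub (integrable_const _) (integrable_cos_inner ν ξ)]
  simp

lemma ae_cos_eq_one {ν : Measure E} [IsProbabilityMeasure ν] (hp : ∀ ξ, charFun ν ξ = p ξ)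
    {ξ : E} (hξ : p ξ = 1) : ∀ᵐ v ∂ν, cos ⟪v, ξ⟫ = 1 := by
  have hint := one_sub_eq_integral hp ξ
  rw [hξ, sub_self, eq_comm, integral_eq_zero_iff_of_nonneg
    (fun v => sub_nonneg.2 (cos_le_one _)) (integrable_one_sub_cos_inner ν ξ)] at hint
  filter_upwards [hint] with v hv
  exact (sub_eq_zero.1 hv).symm

/-- The frequencies at which a real characteristic function attains its maximal value `1`. -/
def oneSubgroup (h : IsRealCharFun p) : AddSubgroup E where
  carrier := {ξ | p ξ = 1}
  zero_mem' := h.apply_zero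
  neg_mem' := fun {ξ} hξ => (h.neg ξ).trans hξ
  add_mem' := fun {ξ η} hξ hη => by
    obtain ⟨ν, _, hp⟩ := h
    have hcos : ∀ᵐ v ∂ν, 1 - cos ⟪v, ξ + η⟫ = 0 := by
      filter_upwards [ae_cos_eq_one hp hξ, ae_cos_eq_one hp hη] with v hvξ hvη
      have hsin : sin ⟪v, ξ⟫ = 0 := sin_eq_zero_iff_cos_eq.2 (Or.inl hvξ)
      rw [inner_add_right, cos_add, hvξ, hvη, hsin]
      ring
    have := one_sub_eq_integral hp (ξ + η)
    rw [integral_congr_ae hcos, integral_zero] at this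
    exact (sub_eq_zero.1 this).symm

lemma mem_oneSubgroup (h : IsRealCharFun p) {ξ : E} : ξ ∈ h.oneSubgroup ↔ p ξ = 1 := Iff.rfl

lemma one_sub_two_smul_le (h : IsRealCharFun p) (ξ : E) :
    1 - p ((2 : ℝ) • ξ) ≤ 4 * (1 - p ξ) := by
  obtain ⟨ν, _, hp⟩ := h
  rw [one_sub_eq_integral hp, one_sub_eq_integral hp, ← integral_const_mul]
  refine integral_mono (integrable_one_sub_cos_inner ν _)
    ((integrable_one_sub_cos_inner ν _).const_mul 4) fun v => ?_
  simp only [inner_smul_right, cos_two_mul]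
  nlinarith [sq_nonneg (1 - cos ⟪v, ξ⟫)]

lemma integrable_inner_sq {ν : Measure E} [IsProbabilityMeasure ν] (hp : ∀ ξ, charFun ν ξ = p ξ)
    {C : ℝ} (hC : ∀ ξ, 1 - p ξ ≤ C * ‖ξ‖ ^ 2) (ω : E) :
    Integrable (fun v : E => ⟪v, ω⟫ ^ 2) ν := by
  have hlim : ∀ y : ℝ, Tendsto (fun n : ℕ => 2 * ((1 - cos ((1 / ((n : ℝ) + 1)) * y)) /
      (1 / ((n : ℝ) + 1)) ^ 2)) atTop (𝓝 (y ^ 2)) := fun y => by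
    have h0 : Tendsto (fun n : ℕ => 1 / ((n : ℝ) + 1) * y) atTop (𝓝 0) := by
      simpa using tendsto_one_div_add_atTop_nhds_zero_nat.mul_const y
    have hdiv := (isLittleO_one_sub_cos_sub_sq.comp_tendsto h0).tendsto_div_nhds_zero
    convert (hdiv.mul_const (2 * y ^ 2)).add_const (y ^ 2) using 2 with n
    · rcases eq_or_ne y 0 with rfl | hy
      · simp
      · simp only [Function.comp_apply]
        field_simp
        ring
    · simp
  refine integrable_of_tendsto_of_integral_le (C := 2 * (C * ‖ω‖ ^ 2))
    (fun n => ?_) (fun n v => ?_) (fun v => hlim ⟪v, ω⟫) (fun n => ?_)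
  · simpa only [inner_smul_right] using
      ((integrable_one_sub_cos_inner ν ((1 / ((n : ℝ) + 1)) • ω)).div_const _).const_mul 2
  · have := cos_le_one (1 / ((n : ℝ) + 1) * ⟪v, ω⟫)
    exact mul_nonneg zero_le_two (div_nonneg (sub_nonneg.2 this) (sq_nonneg _))
  · have hω := hC ((1 / ((n : ℝ) + 1)) • ω)
    rw [one_sub_eq_integral hp, norm_smul, mul_pow, norm_eq_abs, sq_abs] at hω
    simp only [inner_smul_right] at hω
    rw [integral_const_mul, integral_div]
    gcongr
    rw [div_le_iff₀ (by positivity)]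
    linarith

end IsRealCharFun

end RealCharFun

section SecondMoment

open Asymptotics InnerProductSpace

variable {E : Type*} [NormedAddCommGroup E] [InnerProductSpace ℝ E] [FiniteDimensional ℝ E]
  [MeasurableSpace E] [BorelSpace E] {p : E → ℝ} {C : ℝ}

namespace IsRealCharFun

lemma memLp_two_id {ν : Measure E} [IsProbabilityMeasure ν] (hp : ∀ ξ, charFun ν ξ = p ξ)
    (hC : ∀ ξ, 1 - p ξ ≤ C * ‖ξ‖ ^ 2) : MemLp id 2 ν := by
  rw [memLp_two_iff_integrable_sq_norm (by fun_prop)]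
  simp_rw [id, ← (stdOrthonormalBasis ℝ E).sum_sq_inner_left]
  exact integrable_finsetSum _ fun i _ => integrable_inner_sq hp hC _

lemma differentiable (h : IsRealCharFun p) (hC : ∀ ξ, 1 - p ξ ≤ C * ‖ξ‖ ^ 2) :
    Differentiable ℝ p := by
  obtain ⟨ν, _, hp⟩ := h
  have hmem : MemLp id (1 : ℕ) ν := (memLp_two_id hp hC).mono_exponent (by norm_num)
  have hre : p = fun ξ => Complex.reCLM (charFun ν ξ) := by ext ξ; simp [hp]
  rw [hre]
  exact Complex.reCLM.differentiable.comp ((contDiff_charFun hmem).differentiable (by norm_num))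

lemma isLittleO_integral_one_sub_cos {ν : Measure E} (hν : MemLp id 2 ν) :
    (fun ξ => ∫ v, (1 - cos ⟪v, ξ⟫ - ⟪v, ξ⟫ ^ 2 / 2) ∂ν) =o[𝓝 0] fun ξ => ‖ξ‖ ^ 2 := by
  rw [isLittleO_iff_tendsto fun ξ hξ => by simp [norm_eq_zero.1 (sq_eq_zero_iff.1 hξ)]]
  simp_rw [← integral_div]
  rw [← integral_zero E ℝ]
  refine tendsto_integral_filter_of_dominated_convergence (fun v => ‖v‖ ^ 2 / 2)
    (.of_forall fun ξ => by fun_prop) (.of_forall fun ξ => ae_of_all _ fun v => ?_)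
    ((memLp_two_iff_integrable_sq_norm hν.1).1 hν |>.div_const 2) (ae_of_all _ fun v => ?_)
  · rcases eq_or_ne ξ 0 with rfl | hξ
    · simpa using div_nonneg (sq_nonneg ‖v‖) zero_le_two
    have hinner : ⟪v, ξ⟫ ^ 2 ≤ ‖v‖ ^ 2 * ‖ξ‖ ^ 2 := by
      rw [← mul_pow]
      exact sq_le_sq.2 (by simpa [abs_mul] using abs_real_inner_le_norm v ξ)
    have hlow := one_sub_sq_div_two_le_cos (x := ⟪v, ξ⟫)
    have hup := cos_le_one ⟪v, ξ⟫
    rw [norm_div, norm_pow, norm_norm, div_le_iff₀ (by positivity), norm_eq_abs, abs_le]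
    constructor <;> linarith
  · have h0 : Tendsto (fun ξ => ⟪v, ξ⟫) (𝓝 0) (𝓝 0) := by
      simpa using (continuous_const.inner continuous_id : Continuous fun ξ : E => ⟪v, ξ⟫).tendsto 0
    refine ((isLittleO_one_sub_cos_sub_sq.comp_tendsto h0).trans_isBigO
      (IsBigO.of_bound (‖v‖ ^ 2) (.of_forall fun ξ => ?_))).tendsto_div_nhds_zero
    simp only [Function.comp_apply, norm_pow, norm_norm, ← mul_pow]
    gcongr
    exact norm_inner_le_norm v ξ

lemma exists_bilin_isLittleO (h : IsRealCharFun p) (hC : ∀ ξ, 1 - p ξ ≤ C * ‖ξ‖ ^ 2) :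
    ∃ B : E →L[ℝ] E →L[ℝ] ℝ, (fun ξ => 1 - p ξ - B ξ ξ) =o[𝓝 0] fun ξ => ‖ξ‖ ^ 2 := by
  obtain ⟨ν, _, hp⟩ := h
  have hν := memLp_two_id hp hC
  refine ⟨(1 / 2 : ℝ) • (ProbabilityTheory.uncenteredCovarianceBilinDual ν).bilinearComp
    (toDualMap ℝ E).toContinuousLinearMap (toDualMap ℝ E).toContinuousLinearMap,
    (isLittleO_integral_one_sub_cos hν).congr_left fun ξ => ?_⟩
  rw [integral_sub (integrable_one_sub_cos_inner ν ξ) ((integrable_inner_sq hp hC ξ).div_const 2),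
    one_sub_eq_integral hp, integral_div]
  congr 1
  simp [ProbabilityTheory.uncenteredCovarianceBilinDual_apply hν, real_inner_comm ξ, ← pow_two]
  ring

end IsRealCharFun

end SecondMoment

section IsCharFn

lemma charFn_eq_charFun (Ψ : Measure E3) (ξ : E3) : charFn Ψ ξ = charFun Ψ (-ξ) := by
  simp only [charFn, charFun_apply, inner_neg_right]
  congr 1 with v
  push_cast
  ring_nf

namespace IsCharFn

variable {ψ : E3 → ℂ}

lemma isRealCharFun_norm_sq (h : IsCharFn ψ) : IsRealCharFun fun ξ => ‖ψ ξ‖ ^ 2 := by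
  obtain ⟨Ψ, _, rfl⟩ := h
  refine ⟨symmetrization Ψ, inferInstance, fun ξ => ?_⟩
  simp only [charFun_symmetrization, charFn_eq_charFun, charFun_neg, RCLike.norm_conj]

lemma norm_le_one (h : IsCharFn ψ) (ξ : E3) : ‖ψ ξ‖ ≤ 1 := by
  obtain ⟨Ψ, _, rfl⟩ := h
  rw [charFn_eq_charFun]
  exact norm_charFun_le_one _

lemma apply_zero (h : IsCharFn ψ) : ψ 0 = 1 := by
  obtain ⟨Ψ, _, rfl⟩ := h
  simp [charFn_eq_charFun, charFun_zero]

lemma continuous (h : IsCharFn ψ) : Continuous ψ := by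
  obtain ⟨Ψ, _, rfl⟩ := h
  simp_rw [funext (charFn_eq_charFun Ψ)]
  exact continuous_charFun.comp continuous_neg

end IsCharFn

lemma exists_singleton_of_norm_charFn_eq_one (Ψ : Measure E3) [IsProbabilityMeasure Ψ]
    (h : ∀ ξ, ‖charFn Ψ ξ‖ = 1) : ∃ v, Ψ {v} = 1 := by
  refine exists_singleton_of_norm_charFun_eq_one Ψ fun ξ => ?_
  simpa [charFn_eq_charFun] using h (-ξ)

end IsCharFn

section Sphere

open scoped Pointwise
open Module

variable {E : Type*} [NormedAddCommGroup E] [InnerProductSpace ℝ E]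

/-- The action of a linear isometry on the unit sphere. -/
def sphereHomeomorph (R : E ≃ₗᵢ[ℝ] E) : sphere (0 : E) 1 ≃ₜ sphere (0 : E) 1 :=
  R.toHomeomorph.subtype fun x => by simp

@[simp]
lemma coe_sphereHomeomorph (R : E ≃ₗᵢ[ℝ] E) (σ : sphere (0 : E) 1) :
    (sphereHomeomorph R σ : E) = R σ := rfl

lemma measurePreserving_sphereHomeomorph [FiniteDimensional ℝ E] [MeasurableSpace E] [BorelSpace E]
    (R : E ≃ₗᵢ[ℝ] E) :
    MeasurePreserving (sphereHomeomorph R) (volume : Measure E).toSphere volume.toSphere := by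
  have hmeas : Measurable (sphereHomeomorph R) := (sphereHomeomorph R).continuous.measurable
  refine ⟨hmeas, ?_⟩
  ext s hs
  have hcone : Ioo (0 : ℝ) 1 • ((↑) '' (sphereHomeomorph R ⁻¹' s) : Set E)
      = R ⁻¹' (Ioo (0 : ℝ) 1 • ((↑) '' s : Set E)) := by
    ext x
    simp only [Set.mem_smul, mem_image, mem_preimage]
    constructor
    · rintro ⟨a, ha, _, ⟨σ, hσ, rfl⟩, rfl⟩
      exact ⟨a, ha, _, ⟨_, hσ, rfl⟩, by simp⟩
    · rintro ⟨a, ha, _, ⟨σ, hσ, rfl⟩, hx⟩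
      refine ⟨a, ha, _, ⟨(sphereHomeomorph R).symm σ, by simpa using hσ, rfl⟩, R.injective ?_⟩
      have hR : R ((sphereHomeomorph R).symm σ) = σ :=
        congrArg Subtype.val ((sphereHomeomorph R).apply_symm_apply σ)
      rw [map_smul, hR, hx]
  rw [Measure.map_apply hmeas hs, Measure.toSphere_apply' _ (hmeas hs),
    Measure.toSphere_apply' _ hs, hcone]
  congr 1
  exact R.measurePreserving.measure_preimage_equiv (f := R.toMeasurableEquiv) _

lemma exists_linearIsometryEquiv_swap {v w : E} (h : ‖v‖ = ‖w‖) :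
    ∃ R : E ≃ₗᵢ[ℝ] E, R v = w ∧ R w = v ∧ ∀ e : E, ⟪e, v⟫ = ⟪e, w⟫ → R e = e := by
  have hv : (ℝ ∙ (v - w))ᗮ.reflection v = w := Submodule.reflection_sub h
  refine ⟨(ℝ ∙ (v - w))ᗮ.reflection, hv, ?_, fun e he => ?_⟩
  · exact (congrArg _ hv).symm.trans (Submodule.reflection_reflection _ v)
  · refine Submodule.reflection_mem_subspace_eq_self ?_
    rw [Submodule.mem_orthogonal_singleton_iff_inner_left, inner_sub_right, he, sub_self]

lemma exists_linearIsometryEquiv_pair {e σ e' σ' : E} (he : ‖e‖ = ‖e'‖) (hσ : ‖σ‖ = ‖σ'‖)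
    (h : ⟪e, σ⟫ = ⟪e', σ'⟫) : ∃ R : E ≃ₗᵢ[ℝ] E, R e = e' ∧ R σ = σ' := by
  obtain ⟨R, hR, -⟩ := exists_linearIsometryEquiv_swap he
  obtain ⟨R', hR', -, hfix⟩ :=
    exists_linearIsometryEquiv_swap (v := R σ) (w := σ') (by rw [R.norm_map, hσ])
  refine ⟨R.trans R', ?_, by simpa using hR'⟩
  rw [LinearIsometryEquiv.trans_apply, hR]
  exact hfix e' (by rw [← hR, R.inner_map_map, h, hR])

lemma exists_unit_orthogonal_pair [FiniteDimensional ℝ E] (hE : 2 < finrank ℝ E) (v w : E) :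
    ∃ n : E, ‖n‖ = 1 ∧ ⟪n, v⟫ = 0 ∧ ⟪n, w⟫ = 0 := by
  have hne : (Submodule.span ℝ {v, w})ᗮ ≠ ⊥ := fun hbot => by
    classical
    rw [Submodule.orthogonal_eq_bot_iff] at hbot
    have hle := finrank_span_finset_le_card (R := ℝ) ({v, w} : Finset E)
    rw [Finset.coe_pair, Set.finrank, hbot, finrank_top] at hle
    exact absurd (hle.trans Finset.card_le_two) hE.not_ge
  obtain ⟨n, hn, hn0⟩ := Submodule.exists_mem_ne_zero_of_ne_bot hne
  rw [Submodule.mem_orthogonal'] at hn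
  refine ⟨‖n‖⁻¹ • n, norm_smul_inv_norm (𝕜 := ℝ) hn0, ?_, ?_⟩
  all_goals rw [inner_smul_left, hn _ (Submodule.subset_span (by simp)), mul_zero]

lemma exists_add_eq_of_norm_le [FiniteDimensional ℝ E] (hE : 2 < finrank ℝ E) {r : ℝ} {η : E}
    (hη : ‖η‖ ≤ 2 * r) : ∃ u v : E, ‖u‖ = r ∧ ‖v‖ = r ∧ u + v = η := by
  obtain ⟨n, hn, hnη, -⟩ := exists_unit_orthogonal_pair hE η η
  have hr : 0 ≤ r := by linarith [norm_nonneg η]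
  set d := √(r ^ 2 - ‖η‖ ^ 2 / 4)
  have hd : d ^ 2 = r ^ 2 - ‖η‖ ^ 2 / 4 := sq_sqrt (by nlinarith [norm_nonneg η])
  have hnorm : ∀ a : ℝ, a ^ 2 = d ^ 2 → ‖(1 / 2 : ℝ) • η + a • n‖ = r := fun a ha => by
    rw [← sq_eq_sq₀ (norm_nonneg _) hr, norm_add_sq_real, norm_smul, norm_smul,
      inner_smul_left, inner_smul_right, hn, real_inner_comm, hnη, mul_pow, mul_pow, norm_eq_abs,
      norm_eq_abs, sq_abs, sq_abs, ha, hd]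
    ring
  exact ⟨_, _, hnorm d rfl, hnorm (-d) (neg_sq d), by module⟩

lemma addSubgroup_eq_top_of_sphere_subset [FiniteDimensional ℝ E] (hE : 2 < finrank ℝ E)
    (H : AddSubgroup E) {r : ℝ} (hr : 0 < r) (hH : ∀ v : E, ‖v‖ = r → v ∈ H) : H = ⊤ := by
  have hball : ball (0 : E) (2 * r) ⊆ H := fun η hη => by
    obtain ⟨u, v, hu, hv, rfl⟩ := exists_add_eq_of_norm_le hE (mem_ball_zero_iff.1 hη).le
    exact H.add_mem (hH u hu) (hH v hv)
  have hopen : IsOpen (H : Set E) :=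
    H.isOpen_of_mem_nhds (mem_of_superset (ball_mem_nhds 0 (by positivity)) hball)
  exact SetLike.coe_injective
    ((IsClopen.eq_univ ⟨H.isClosed_of_isOpen hopen, hopen⟩ ⟨0, H.zero_mem⟩))

lemma forall_sphere_of_forall_inner_gt (hE : 1 < Module.rank ℝ E) {P : sphere (0 : E) 1 → Prop}
    {γ : ℝ} (hγ : γ < 1) (hP : ∀ e σ : sphere (0 : E) 1, γ < ⟪(e : E), (σ : E)⟫ → P e → P σ)
    {e : sphere (0 : E) 1} (he : P e) (σ : sphere (0 : E) 1) : P σ := by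
  have : PreconnectedSpace (sphere (0 : E) 1) :=
    Subtype.preconnectedSpace (isPreconnected_sphere hE 0 1)
  refine PreconnectedSpace.induction₂' (fun e σ => P e → P σ) (fun x => ?_)
    ⟨fun a b c hab hbc ha => hbc (hab ha)⟩ e σ he
  have hcont : Continuous fun y : sphere (0 : E) 1 => ⟪(x : E), (y : E)⟫ := by fun_prop
  have hx : γ < ⟪(x : E), (x : E)⟫ := by simpa [real_inner_self_eq_norm_sq] using hγ
  filter_upwards [hcont.continuousAt.eventually (lt_mem_nhds hx)] with y hy
  exact ⟨hP x y hy, hP y x (by rwa [real_inner_comm])⟩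

end Sphere

section CollisionGeometry

lemma two_lt_finrank_E3 : 2 < Module.finrank ℝ E3 := by simp

lemma one_lt_rank_E3 : 1 < Module.rank ℝ E3 := by
  rw [← Module.finrank_eq_rank, finrank_euclideanSpace_fin]
  norm_num

/-- The unit sphere of directions `σ`. -/
abbrev S2 : Type := sphere (0 : E3) 1

instance : IsFiniteMeasure sphμ := inferInstanceAs (IsFiniteMeasure (volume : Measure E3).toSphere)

instance : Measure.IsOpenPosMeasure sphμ :=
  inferInstanceAs (Measure.IsOpenPosMeasure (volume : Measure E3).toSphere)

/-- The cosine of the deviation angle, which is the argument of the collision kernel. It takes the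
junk value `0` at `ξ = 0`. -/
def cosAngle (ξ : E3) (σ : S2) : ℝ := ⟪ξ, (σ : E3)⟫ / ‖ξ‖

variable {ξ ξ' : E3} {σ σ' : S2}

lemma continuous_cosAngle (ξ : E3) : Continuous (cosAngle ξ) := by unfold cosAngle; fun_prop

lemma norm_mul_cosAngle (ξ : E3) (σ : S2) : ‖ξ‖ * cosAngle ξ σ = ⟪ξ, (σ : E3)⟫ := by
  rcases eq_or_ne ξ 0 with rfl | hξ
  · simp
  · exact mul_div_cancel₀ _ (norm_ne_zero_iff.2 hξ)

lemma abs_cosAngle_le_one (ξ : E3) (σ : S2) : |cosAngle ξ σ| ≤ 1 := by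
  rw [cosAngle, abs_div, abs_norm]
  exact div_le_one_of_le₀ (by simpa using abs_real_inner_le_norm ξ σ) (norm_nonneg ξ)

lemma cosAngle_le_one (ξ : E3) (σ : S2) : cosAngle ξ σ ≤ 1 :=
  (le_abs_self _).trans (abs_cosAngle_le_one ξ σ)

lemma cosAngle_smul {r : ℝ} (hr : 0 < r) (ξ : E3) : cosAngle (r • ξ) = cosAngle ξ := by
  ext σ
  rw [cosAngle, cosAngle, inner_smul_left, norm_smul, norm_of_nonneg hr.le]
  exact mul_div_mul_left _ _ hr.ne'

lemma cosAngle_coe (e σ : S2) : cosAngle e σ = ⟪(e : E3), (σ : E3)⟫ := by simp [cosAngle]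

/-- The direction of a nonzero frequency. -/
def direction (ξ : E3) (hξ : ξ ≠ 0) : S2 :=
  ⟨‖ξ‖⁻¹ • ξ, by simpa using norm_smul_inv_norm (𝕜 := ℝ) hξ⟩

lemma norm_smul_direction (hξ : ξ ≠ 0) : ‖ξ‖ • (direction ξ hξ : E3) = ξ := by
  simp [direction, smul_smul, norm_ne_zero_iff.2 hξ]

lemma cosAngle_direction (hξ : ξ ≠ 0) : cosAngle (direction ξ hξ) = cosAngle ξ :=
  cosAngle_smul (inv_pos.2 (norm_pos_iff.2 hξ)) ξ

lemma cosAngle_self (hξ : ξ ≠ 0) : cosAngle ξ (direction ξ hξ) = 1 := by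
  rw [← cosAngle_direction hξ, cosAngle_coe, real_inner_self_eq_norm_sq, norm_eq_of_mem_sphere,
    one_pow]

lemma exists_measurePreserving_cosAngle (hξ : ξ ≠ 0) (hξ' : ξ' ≠ 0)
    (h : cosAngle ξ σ = cosAngle ξ' σ') : ∃ φ : S2 ≃ₜ S2,
      MeasurePreserving φ sphμ sphμ ∧ φ σ = σ' ∧ ∀ τ, cosAngle ξ' (φ τ) = cosAngle ξ τ := by
  rw [← cosAngle_direction hξ, ← cosAngle_direction hξ', cosAngle_coe, cosAngle_coe] at h
  obtain ⟨R, hRe, hRσ⟩ := exists_linearIsometryEquiv_pair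
    (by simp only [norm_eq_of_mem_sphere]) (by simp only [norm_eq_of_mem_sphere]) h
  refine ⟨sphereHomeomorph R, measurePreserving_sphereHomeomorph R, Subtype.ext hRσ, fun τ => ?_⟩
  rw [← cosAngle_direction hξ, ← cosAngle_direction hξ', cosAngle_coe, cosAngle_coe, ← hRe,
    coe_sphereHomeomorph, R.inner_map_map]

lemma norm_xiPlus_sq (ξ : E3) (σ : S2) : ‖xiPlus ξ σ‖ ^ 2 = ‖ξ‖ ^ 2 * ((1 + cosAngle ξ σ) / 2) := by
  rw [xiPlus, norm_add_sq_real, norm_smul, norm_smul, inner_smul_left, inner_smul_right,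
    norm_eq_of_mem_sphere, ← norm_mul_cosAngle]
  simp
  ring

lemma norm_xiMinus_sq (ξ : E3) (σ : S2) :
    ‖xiMinus ξ σ‖ ^ 2 = ‖ξ‖ ^ 2 * ((1 - cosAngle ξ σ) / 2) := by
  rw [xiMinus, norm_sub_sq_real, norm_smul, norm_smul, inner_smul_left, inner_smul_right,
    norm_eq_of_mem_sphere, ← norm_mul_cosAngle]
  simp
  ring

lemma xiPlus_sub_xiMinus (ξ : E3) (σ : S2) : xiPlus ξ σ - xiMinus ξ σ = ‖ξ‖ • (σ : E3) := by
  unfold xiPlus xiMinus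
  module

lemma norm_xiPlus_sq_add (ξ : E3) (σ : S2) : ‖xiPlus ξ σ‖ ^ 2 + ‖xiMinus ξ σ‖ ^ 2 = ‖ξ‖ ^ 2 := by
  rw [norm_xiPlus_sq, norm_xiMinus_sq]
  ring

@[fun_prop]
lemma continuous_xiPlus (ξ : E3) : Continuous (xiPlus ξ) := by unfold xiPlus; fun_prop

@[fun_prop]
lemma continuous_xiMinus (ξ : E3) : Continuous (xiMinus ξ) := by unfold xiMinus; fun_prop

lemma norm_xiPlus_le (ξ : E3) (σ : S2) : ‖xiPlus ξ σ‖ ≤ ‖ξ‖ :=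
  le_of_sq_le_sq (by linarith [norm_xiPlus_sq_add ξ σ, sq_nonneg ‖xiMinus ξ σ‖]) (norm_nonneg ξ)

lemma norm_xiMinus_le (ξ : E3) (σ : S2) : ‖xiMinus ξ σ‖ ≤ ‖ξ‖ :=
  le_of_sq_le_sq (by linarith [norm_xiPlus_sq_add ξ σ, sq_nonneg ‖xiPlus ξ σ‖]) (norm_nonneg ξ)

end CollisionGeometry

section Subsolution

variable {b : ℝ → ℝ} {p : ℝ → E3 → ℝ} {t : ℝ} {ξ : E3}

/-- The bracket `p(ξ⁺) p(ξ⁻) - p(ξ)` of the Bobylev collision integrand, for a real function `p`. -/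
def defect (p : E3 → ℝ) (ξ : E3) (σ : S2) : ℝ := p (xiPlus ξ σ) * p (xiMinus ξ σ) - p ξ

lemma continuous_defect {p : E3 → ℝ} (hp : Continuous p) (ξ : E3) : Continuous (defect p ξ) := by
  unfold defect
  fun_prop

/-- The differential inequality satisfied by `|ψ|²` when `ψ` solves the Bobylev equation, together
with the properties of `|ψ|²` that do not refer to the equation. -/
structure IsSubsolution (b : ℝ → ℝ) (p : ℝ → E3 → ℝ) : Prop where
  continuousOn : ContinuousOn (fun z : ℝ × E3 => p z.1 z.2) (Ici 0 ×ˢ univ)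
  isRealCharFun : ∀ t ≥ 0, IsRealCharFun (p t)
  nonneg : ∀ t ≥ 0, ∀ ξ, 0 ≤ p t ξ
  integrable : ∀ t ≥ 0, ∀ ξ, Integrable (fun σ => b (cosAngle ξ σ) * defect (p t) ξ σ) sphμ
  exists_hasDerivWithinAt : ∀ t ≥ 0, ∀ ξ, ∃ d ≤ ∫ σ, b (cosAngle ξ σ) * defect (p t) ξ σ ∂sphμ,
    HasDerivWithinAt (fun τ => p τ ξ) d (Ici 0) t

lemma two_mul_inner_sub_le (z w : ℂ) : 2 * inner ℝ z (w - z) ≤ ‖w‖ ^ 2 - ‖z‖ ^ 2 := by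
  rw [inner_sub_right, real_inner_self_eq_norm_sq]
  nlinarith [real_inner_le_norm z w, sq_nonneg (‖w‖ - ‖z‖)]

lemma abs_norm_sq_sub_le {z w : ℂ} (hz : ‖z‖ ≤ 1) (hw : ‖w‖ ≤ 1) :
    |‖w‖ ^ 2 - ‖z‖ ^ 2| ≤ 2 * ‖w - z‖ := by
  rw [sq_sub_sq, abs_mul, abs_of_nonneg (by positivity)]
  gcongr
  · linarith
  · exact abs_norm_sub_norm_le w z

lemma IsBobylevSolution.isSubsolution_norm_sq {ψ : ℝ → E3 → ℂ} {ψ₀ : E3 → ℂ}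
    (hψ : IsBobylevSolution b ψ ψ₀) (hb : Measurable b) (hb0 : ∀ x, 0 ≤ b x) :
    IsSubsolution b fun t ξ => ‖ψ t ξ‖ ^ 2 := by
  have hint : ∀ t ≥ 0, ∀ ξ, Integrable
      (fun σ => b (cosAngle ξ σ) * defect (fun ξ => ‖ψ t ξ‖ ^ 2) ξ σ) sphμ := fun t ht ξ => by
    have hchar := hψ.isCharFn t ht
    refine ((hψ.integrable t ht ξ).norm.const_mul 2).mono'
      ((hb.comp (continuous_cosAngle ξ).measurable).mul
        (continuous_defect (hchar.continuous.norm.pow 2) ξ).measurable).aestronglyMeasurable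
      (ae_of_all _ fun σ => ?_)
    rw [norm_mul, bobylevIntegrand, norm_mul, Complex.norm_real, mul_left_comm, defect, ← mul_pow,
      ← norm_mul (ψ t _)]
    refine mul_le_mul_of_nonneg_left (abs_norm_sq_sub_le (hchar.norm_le_one ξ) ?_)
      (norm_nonneg (b (cosAngle ξ σ)))
    rw [norm_mul]
    exact mul_le_one₀ (hchar.norm_le_one _) (norm_nonneg _) (hchar.norm_le_one _)
  refine ⟨hψ.cont.norm.pow 2, fun t ht => (hψ.isCharFn t ht).isRealCharFun_norm_sq,
    fun t _ ξ => by positivity, hint, fun t ht ξ => ⟨_, ?_, (hψ.eq t ht ξ).norm_sq⟩⟩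
  have hI := hψ.integrable t ht ξ
  rw [← integral_inner hI, ← integral_const_mul]
  refine integral_mono ((hI.const_inner _).const_mul 2) (hint t ht ξ) fun σ => ?_
  calc 2 * inner ℝ (ψ t ξ) (bobylevIntegrand b ψ t ξ σ)
      = b (cosAngle ξ σ)
        * (2 * inner ℝ (ψ t ξ) (ψ t (xiPlus ξ σ) * ψ t (xiMinus ξ σ) - ψ t ξ)) := by
        rw [bobylevIntegrand, ← Complex.real_smul, inner_smul_right, cosAngle]
        ring
    _ ≤ b (cosAngle ξ σ) * defect (fun ξ => ‖ψ t ξ‖ ^ 2) ξ σ := by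
        have h := two_mul_inner_sub_le (ψ t ξ) (ψ t (xiPlus ξ σ) * ψ t (xiMinus ξ σ))
        rw [norm_mul, mul_pow] at h
        exact mul_le_mul_of_nonneg_left h (hb0 _)

namespace IsSubsolution

lemma le_one (hp : IsSubsolution b p) (ht : 0 ≤ t) (ξ : E3) : p t ξ ≤ 1 :=
  (hp.isRealCharFun t ht).le_one ξ

lemma exists_hasDerivAt (hp : IsSubsolution b p) (ht : 0 < t) (ξ : E3) :
    ∃ d ≤ ∫ σ, b (cosAngle ξ σ) * defect (p t) ξ σ ∂sphμ, HasDerivAt (fun τ => p τ ξ) d t := by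
  obtain ⟨d, hd, hder⟩ := hp.exists_hasDerivWithinAt t ht.le ξ
  exact ⟨d, hd, hder.hasDerivAt (Ici_mem_nhds ht)⟩

lemma mul_le_one (hp : IsSubsolution b p) (ht : 0 ≤ t) (ξ η : E3) : p t ξ * p t η ≤ 1 :=
  mul_le_one₀ (hp.le_one ht ξ) (hp.nonneg t ht η) (hp.le_one ht η)

lemma defect_eq_zero_of_eq_one (hp : IsSubsolution b p) (hb0 : ∀ x, 0 ≤ b x) {γ : ℝ}
    (hγ : ∀ x ∈ Ioo γ 1, 0 < b x) (ht : 0 < t) (h1 : p t ξ = 1) {σ : S2}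
    (hσ : cosAngle ξ σ ∈ Ioo γ 1) : defect (p t) ξ σ = 0 := by
  have hnonpos : ∀ σ, b (cosAngle ξ σ) * defect (p t) ξ σ ≤ 0 := fun σ =>
    mul_nonpos_of_nonneg_of_nonpos (hb0 _)
      (by rw [defect, h1]; exact sub_nonpos.2 (hp.mul_le_one ht.le _ _))
  obtain ⟨d, hd, hder⟩ := hp.exists_hasDerivAt ht ξ
  -- As `p ≤ 1`, the value `1` is a maximum in time, so the collision integral vanishes.
  have hmax : IsLocalMax (fun τ => p τ ξ) t := by
    filter_upwards [Ioi_mem_nhds ht] with τ hτ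
    exact h1 ▸ hp.le_one hτ.le ξ
  have hzero : ∫ σ, -(b (cosAngle ξ σ) * defect (p t) ξ σ) ∂sphμ = 0 := by
    rw [integral_neg, neg_eq_zero]
    exact le_antisymm (integral_nonpos hnonpos) (hmax.hasDerivAt_eq_zero hder ▸ hd)
  have hae := (integral_eq_zero_iff_of_nonneg (fun σ => neg_nonneg.2 (hnonpos σ))
    (hp.integrable t ht.le ξ).neg).1 hzero
  have hopen : IsOpen (cosAngle ξ ⁻¹' Ioo γ 1) := isOpen_Ioo.preimage (continuous_cosAngle ξ)
  refine Measure.eqOn_open_of_ae_eq (μ := sphμ) (g := fun _ => 0) ?_ hopen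
    (continuous_defect (hp.isRealCharFun t ht.le).continuous ξ).continuousOn continuousOn_const hσ
  filter_upwards [ae_restrict_of_ae hae, ae_restrict_mem hopen.measurableSet] with σ h0 hmem
  simpa [(hγ _ hmem).ne'] using h0

lemma eq_one_of_eq_one (hp : IsSubsolution b p) (hb0 : ∀ x, 0 ≤ b x)
    (hb1 : ∀ᶠ x in 𝓝[<] 1, 0 < b x) (ht : 0 < t) (hξ : ξ ≠ 0) (h1 : p t ξ = 1) (η : E3) :
    p t η = 1 := by
  obtain ⟨γ, hγ, hbγ⟩ := mem_nhdsLT_iff_exists_Ioo_subset.1 hb1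
  set H := (hp.isRealCharFun t ht.le).oneSubgroup
  have hr : 0 < ‖ξ‖ := norm_pos_iff.2 hξ
  have hstep : ∀ e σ : S2, γ < ⟪(e : E3), (σ : E3)⟫ → ‖ξ‖ • (e : E3) ∈ H → ‖ξ‖ • (σ : E3) ∈ H := by
    intro e σ heσ he
    rw [← cosAngle_coe, ← cosAngle_smul hr] at heσ
    rcases (cosAngle_le_one (‖ξ‖ • (e : E3)) σ).eq_or_lt with hone | hlt
    · rw [cosAngle_smul hr, cosAngle_coe, inner_eq_one_iff_of_norm_eq_one (by simp) (by simp)]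
        at hone
      rwa [← hone]
    have hmul := sub_eq_zero.1 (hp.defect_eq_zero_of_eq_one hb0 hbγ ht he ⟨heσ, hlt⟩)
    rw [show p t _ = 1 from he] at hmul
    have hsub := xiPlus_sub_xiMinus (‖ξ‖ • (e : E3)) σ
    rw [norm_smul, norm_norm, norm_eq_of_mem_sphere, mul_one] at hsub
    rw [← hsub]
    refine H.sub_mem ?_ ?_ <;> refine le_antisymm (hp.le_one ht.le _) ?_
    · nlinarith [hp.nonneg t ht.le (xiPlus (‖ξ‖ • (e : E3)) σ),
        hp.le_one ht.le (xiMinus (‖ξ‖ • (e : E3)) σ)]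
    · nlinarith [hp.nonneg t ht.le (xiMinus (‖ξ‖ • (e : E3)) σ),
        hp.le_one ht.le (xiPlus (‖ξ‖ • (e : E3)) σ)]
  have htop : H = ⊤ := addSubgroup_eq_top_of_sphere_subset two_lt_finrank_E3 H hr fun v hv => by
    have hv0 : v ≠ 0 := norm_pos_iff.1 (hv ▸ hr)
    have hmem := forall_sphere_of_forall_inner_gt one_lt_rank_E3 hγ hstep (e := direction ξ hξ)
      (by rw [norm_smul_direction]; exact h1) (direction v hv0)
    rwa [← hv, norm_smul_direction] at hmem
  exact (IsRealCharFun.mem_oneSubgroup _).1 (htop ▸ AddSubgroup.mem_top η)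

end IsSubsolution

end Subsolution

section Barrier

lemma forall_neg_of_deriv_neg_of_touch {X : Type*} [TopologicalSpace X] [T2Space X] {K : Set X}
    (hK : IsCompact K) {f : ℝ → X → ℝ} {t₁ t₂ : ℝ}
    (hf : ContinuousOn (fun z : ℝ × X => f z.1 z.2) (Icc t₁ t₂ ×ˢ K))
    (hinit : ∀ x ∈ K, f t₁ x < 0)
    (htouch : ∀ t ∈ Ioc t₁ t₂, ∀ x ∈ K, f t x = 0 → (∀ y ∈ K, f t y ≤ 0) →
      ∃ d < 0, HasDerivAt (fun τ => f τ x) d t) :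
    ∀ t ∈ Icc t₁ t₂, ∀ x ∈ K, f t x < 0 := by
  by_contra! hcon
  obtain ⟨t', ht', x', hx', hnonneg'⟩ := hcon
  have hS : IsCompact ((Icc t₁ t₂ ×ˢ K) ∩ (fun z : ℝ × X => f z.1 z.2) ⁻¹' Ici 0) :=
    (isCompact_Icc.prod hK).of_isClosed_subset (hf.preimage_isClosed_of_isClosed
      (isClosed_Icc.prod hK.isClosed) isClosed_Ici) inter_subset_left
  obtain ⟨⟨t, x⟩, ⟨⟨ht, hx⟩, hnonneg⟩, hmin⟩ :=
    hS.exists_isMinOn ⟨(t', x'), ⟨ht', hx'⟩, hnonneg'⟩ continuousOn_fst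
  have ht₁ : t₁ < t := ht.1.lt_of_ne fun h => (hinit x hx).not_ge (h ▸ hnonneg)
  have hbefore : ∀ᶠ τ in 𝓝[<] t, τ ∈ Icc t₁ t₂ ∧ ∀ y ∈ K, f τ y < 0 := by
    filter_upwards [Ioo_mem_nhdsLT ht₁] with τ hτ
    have hτ' : τ ∈ Icc t₁ t₂ := ⟨hτ.1.le, hτ.2.le.trans ht.2⟩
    exact ⟨hτ', fun y hy => not_le.1 fun h => hτ.2.not_ge
      (isMinOn_iff.1 hmin (τ, y) ⟨⟨hτ', hy⟩, h⟩)⟩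
  have hle : ∀ y ∈ K, f t y ≤ 0 := fun y hy => by
    have hlim : Tendsto (fun τ => (τ, y)) (𝓝[<] t) (𝓝[Icc t₁ t₂ ×ˢ K] (t, y)) :=
      tendsto_nhdsWithin_iff.2 ⟨(tendsto_nhdsWithin_of_tendsto_nhds tendsto_id).prodMk_nhds
        tendsto_const_nhds, hbefore.mono fun τ hτ => ⟨hτ.1, hy⟩⟩
    exact le_of_tendsto ((hf (t, y) ⟨ht, hy⟩).tendsto.comp hlim)
      (hbefore.mono fun τ hτ => (hτ.2 y hy).le)
  have hzero : f t x = 0 := (hle x hx).antisymm hnonneg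
  obtain ⟨d, hd, hder⟩ := htouch t ⟨ht₁, ht.2⟩ x hx hzero hle
  refine hd.not_ge (ge_of_tendsto
    ((hasDerivWithinAt_iff_tendsto_slope' self_notMem_Iio).1 hder.hasDerivWithinAt) ?_)
  filter_upwards [hbefore, self_mem_nhdsWithin] with τ hτ hτt
  rw [slope_def_field, hzero, sub_zero]
  exact div_nonneg_of_nonpos (hτ.2 x hx).le (sub_nonpos.2 hτt.le)

end Barrier

section Nondegeneracy

lemma IsRealCharFun.exists_mul_norm_sq_le {E : Type*} [NormedAddCommGroup E]
    [InnerProductSpace ℝ E] [FiniteDimensional ℝ E] [MeasurableSpace E] [BorelSpace E] {p : E → ℝ}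
    (h : IsRealCharFun p) (hlt : ∀ ξ ≠ 0, p ξ < 1) :
    ∃ a > 0, ∀ ξ, ‖ξ‖ ≤ 1 → a * ‖ξ‖ ^ 2 ≤ 1 - p ξ := by
  have hK : IsCompact (closedBall (0 : E) 1 \ ball 0 (1 / 2)) :=
    (isCompact_closedBall 0 1).diff isOpen_ball
  obtain ⟨a, ha, hmin⟩ : ∃ a > 0, ∀ ξ ∈ closedBall (0 : E) 1 \ ball 0 (1 / 2), a ≤ 1 - p ξ := by
    refine hK.exists_forall_le' (a := 0) (continuous_const.sub h.continuous).continuousOn ?_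
    intro ξ hξ
    refine sub_pos.2 (hlt ξ ?_)
    rintro rfl
    exact hξ.2 (mem_ball_self (by norm_num))
  -- The bound `1 - p (2ξ) ≤ 4 (1 - p ξ)` carries the estimate from the outer annulus inwards.
  have hdyadic : ∀ n : ℕ, ∀ ξ : E, (1 / 2) ^ (n + 1) ≤ ‖ξ‖ → ‖ξ‖ ≤ 1 →
      a * ‖ξ‖ ^ 2 ≤ 1 - p ξ := by
    intro n
    induction n with
    | zero =>
      intro ξ hlow hup
      calc a * ‖ξ‖ ^ 2 ≤ a * 1 := by gcongr; exact pow_le_one₀ (norm_nonneg ξ) hup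
        _ ≤ 1 - p ξ := by
          rw [mul_one]
          exact hmin ξ ⟨mem_closedBall_zero_iff.2 hup,
            fun hball => (mem_ball_zero_iff.1 hball).not_ge (by simpa using hlow)⟩
    | succ n ih =>
      intro ξ hlow hup
      rcases le_total (1 / 2) ‖ξ‖ with hhalf | hhalf
      · exact ih ξ ((pow_le_of_le_one (by norm_num) (by norm_num) n.succ_ne_zero).trans hhalf) hup
      have hnorm : ‖(2 : ℝ) • ξ‖ = 2 * ‖ξ‖ := by simp [norm_smul]
      have htwo := ih ((2 : ℝ) • ξ) (by rw [hnorm]; rw [pow_succ] at hlow; linarith)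
        (by rw [hnorm]; linarith)
      rw [hnorm] at htwo
      linarith [h.one_sub_two_smul_le ξ]
  refine ⟨a, ha, fun ξ hξ => ?_⟩
  rcases eq_or_ne ξ 0 with rfl | h0
  · simp [h.apply_zero]
  obtain ⟨n, hn⟩ := exists_pow_lt_of_lt_one (norm_pos_iff.2 h0) (by norm_num : (1 / 2 : ℝ) < 1)
  exact hdyadic n ξ ((pow_le_pow_of_le_one (by norm_num) (by norm_num) n.le_succ).trans hn.le) hξ

end Nondegeneracy

section IntegrableKernel

variable {b : ℝ → ℝ} {p : ℝ → E3 → ℝ} {t t₁ : ℝ} {ξ ξ' : E3}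

lemma integrable_comp_cosAngle {g : ℝ → ℝ} (hξ : ξ ≠ 0) (hξ' : ξ' ≠ 0)
    (hg : Integrable (fun σ => g (cosAngle ξ σ)) sphμ) :
    Integrable (fun σ => g (cosAngle ξ' σ)) sphμ ∧
      ∫ σ, g (cosAngle ξ' σ) ∂sphμ = ∫ σ, g (cosAngle ξ σ) ∂sphμ := by
  obtain ⟨φ, hφ, -, hcos⟩ := exists_measurePreserving_cosAngle hξ hξ'
    ((cosAngle_self hξ).trans (cosAngle_self hξ').symm)
  simp_rw [← hcos] at hg ⊢
  exact ⟨(hφ.integrable_comp_emb φ.measurableEmbedding).1 hg,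
    (hφ.integral_comp φ.measurableEmbedding fun σ => g (cosAngle ξ' σ)).symm⟩

namespace IsSubsolution

lemma defect_le_of_le (hp : IsSubsolution b p) (ht : 0 ≤ t) {a κ : ℝ} (ha : 0 ≤ a)
    (hξ : ‖ξ‖ ≤ 1) (hle : ∀ η, ‖η‖ ≤ 1 → p t η ≤ 1 - a * ‖η‖ ^ 2 + κ)
    (heq : p t ξ = 1 - a * ‖ξ‖ ^ 2 + κ) (σ : S2) :
    defect (p t) ξ σ ≤ a / 2 * (1 - |cosAngle ξ σ|) := by
  have hplus := hle _ ((norm_xiPlus_le ξ σ).trans hξ)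
  have hminus := hle _ ((norm_xiMinus_le ξ σ).trans hξ)
  rw [norm_xiPlus_sq] at hplus
  rw [norm_xiMinus_sq] at hminus
  have hmulPlus := mul_le_of_le_one_right (hp.nonneg t ht (xiPlus ξ σ)) (hp.le_one ht (xiMinus ξ σ))
  have hmulMinus := mul_le_of_le_one_left (hp.nonneg t ht (xiMinus ξ σ)) (hp.le_one ht (xiPlus ξ σ))
  have hscale : a / 2 * (1 - |cosAngle ξ σ|) * ‖ξ‖ ^ 2 ≤ a / 2 * (1 - |cosAngle ξ σ|) :=
    mul_le_of_le_one_right (mul_nonneg (by positivity) (sub_nonneg.2 (abs_cosAngle_le_one ξ σ)))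
      (pow_le_one₀ (norm_nonneg ξ) hξ)
  rw [defect]
  rcases abs_cases (cosAngle ξ σ) with ⟨habs, -⟩ | ⟨habs, -⟩ <;> rw [habs] at hscale ⊢ <;>
    linarith

lemma le_of_init_le (hp : IsSubsolution b p) (hb0 : ∀ x, 0 ≤ b x) {m : ℝ}
    (hint : ∀ ξ ≠ 0, Integrable (fun σ => b (cosAngle ξ σ) * (1 - |cosAngle ξ σ|)) sphμ ∧
      ∫ σ, b (cosAngle ξ σ) * (1 - |cosAngle ξ σ|) ∂sphμ = m) (hm : 0 ≤ m)
    (ht₁ : 0 ≤ t₁) {a κ : ℝ} (ha : 0 < a) (hκ : 0 < κ)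
    (hinit : ∀ ξ, ‖ξ‖ ≤ 1 → a * ‖ξ‖ ^ 2 ≤ 1 - p t₁ ξ) (ht : t₁ ≤ t) (hξ : ‖ξ‖ ≤ 1) :
    p t ξ ≤ 1 - a * ‖ξ‖ ^ 2 + (κ + a / 2 * (m + 1) * (t - t₁)) := by
  set f : ℝ → E3 → ℝ := fun τ ξ => p τ ξ - (1 - a * ‖ξ‖ ^ 2 + (κ + a / 2 * (m + 1) * (τ - t₁)))
  suffices f t ξ < 0 by exact (sub_neg.1 this).le
  refine forall_neg_of_deriv_neg_of_touch (isCompact_closedBall (0 : E3) 1) (t₁ := t₁) (t₂ := t)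
    ?_ (fun ξ hξ => ?_) (fun τ hτ ξ hξ hzero hle => ?_) t ⟨ht, le_rfl⟩ ξ
    (mem_closedBall_zero_iff.2 hξ)
  · exact (hp.continuousOn.mono (prod_mono (fun τ hτ => ht₁.trans hτ.1) (subset_univ _))).sub
      (by fun_prop)
  · have := hinit ξ (mem_closedBall_zero_iff.1 hξ)
    simp only [f, sub_self, mul_zero, add_zero]
    linarith
  have hτ0 : 0 < τ := ht₁.trans_lt hτ.1
  have hgrow : 0 < κ + a / 2 * (m + 1) * (τ - t₁) :=
    add_pos_of_pos_of_nonneg hκ (mul_nonneg (by positivity) (sub_nonneg.2 hτ.1.le))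
  have h0 : ξ ≠ 0 := by
    rintro rfl
    simp only [f, (hp.isRealCharFun τ hτ0.le).apply_zero, norm_zero] at hzero
    linarith
  obtain ⟨d, hd, hder⟩ := hp.exists_hasDerivAt hτ0 ξ
  refine ⟨d - a / 2 * (m + 1), ?_, ?_⟩
  · obtain ⟨hw, hwm⟩ := hint ξ h0
    have hbound : ∫ σ, b (cosAngle ξ σ) * defect (p τ) ξ σ ∂sphμ ≤ a / 2 * m := by
      rw [← hwm, ← integral_const_mul]
      refine integral_mono (hp.integrable τ hτ0.le ξ) (hw.const_mul _) fun σ => ?_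
      have := hp.defect_le_of_le hτ0.le ha.le (mem_closedBall_zero_iff.1 hξ)
        (fun η hη => sub_nonpos.1 (hle η (mem_closedBall_zero_iff.2 hη))) (sub_eq_zero.1 hzero) σ
      exact (mul_le_mul_of_nonneg_left this (hb0 _)).trans_eq (by ring)
    linarith
  · exact hder.sub (((((hasDerivAt_id τ).sub_const t₁).const_mul _).const_add κ).const_add _
      |>.congr_deriv (mul_one _))

lemma lt_one_of_le_add (hp : IsSubsolution b p) (hb0 : ∀ x, 0 ≤ b x)
    (hb1 : ∀ᶠ x in 𝓝[<] 1, 0 < b x) {m : ℝ}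
    (hint : ∀ ξ ≠ 0, Integrable (fun σ => b (cosAngle ξ σ) * (1 - |cosAngle ξ σ|)) sphμ ∧
      ∫ σ, b (cosAngle ξ σ) * (1 - |cosAngle ξ σ|) ∂sphμ = m) (hm : 0 ≤ m)
    (ht₁ : 0 < t₁) (hlt : ∀ ξ ≠ 0, p t₁ ξ < 1) (ht : t₁ ≤ t) (htle : t ≤ t₁ + 1 / (m + 1)) :
    ∀ ξ ≠ 0, p t ξ < 1 := by
  intro ξ hξ
  obtain ⟨a, ha, hinit⟩ := (hp.isRealCharFun t₁ ht₁.le).exists_mul_norm_sq_le hlt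
  set e := direction ξ hξ
  have hle := hp.le_of_init_le hb0 hint hm ht₁.le ha (κ := a / 3) (by positivity) hinit ht (ξ := e)
    (norm_eq_of_mem_sphere e).le
  rw [norm_eq_of_mem_sphere] at hle
  have hfac : (m + 1) * (t - t₁) ≤ 1 := by
    rw [← sub_le_iff_le_add', le_div_iff₀ (by positivity)] at htle
    linarith
  have hgrow : a / 2 * (m + 1) * (t - t₁) ≤ a / 2 := by
    rw [mul_assoc]
    exact mul_le_of_le_one_right (by positivity) hfac
  refine (hp.le_one (ht₁.le.trans ht) ξ).lt_of_ne fun h1 => ?_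
  linarith [hp.eq_one_of_eq_one hb0 hb1 (ht₁.trans_le ht) hξ h1 e]

lemma lt_one_of_integrable (hp : IsSubsolution b p) (hb0 : ∀ x, 0 ≤ b x)
    (hb1 : ∀ᶠ x in 𝓝[<] 1, 0 < b x) {e : S2}
    (he : Integrable (fun σ => b (cosAngle e σ) * (1 - |cosAngle e σ|)) sphμ)
    (ht₁ : 0 < t₁) (hlt : ∀ ξ ≠ 0, p t₁ ξ < 1) (ht : t₁ ≤ t) : ∀ ξ ≠ 0, p t ξ < 1 := by
  set m := ∫ σ, b (cosAngle e σ) * (1 - |cosAngle e σ|) ∂sphμ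
  have hint := fun (ξ : E3) (hξ : ξ ≠ 0) => integrable_comp_cosAngle
    (g := fun x => b x * (1 - |x|)) (ne_zero_of_mem_unit_sphere e) hξ he
  have hm : 0 ≤ m := integral_nonneg fun σ =>
    mul_nonneg (hb0 _) (sub_nonneg.2 (abs_cosAngle_le_one _ σ))
  have hiter : ∀ n : ℕ, ∀ t, t₁ ≤ t → t ≤ t₁ + n * (1 / (m + 1)) → ∀ ξ ≠ 0, p t ξ < 1 := by
    intro n
    induction n with
    | zero => exact fun t h1 h2 => (h1.antisymm (by simpa using h2)) ▸ hlt
    | succ n ih =>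
      intro t h1 h2
      rcases le_total t (t₁ + n * (1 / (m + 1))) with h | h
      · exact ih t h1 h
      have hmid : t₁ ≤ t₁ + n * (1 / (m + 1)) := le_add_of_nonneg_right (by positivity)
      exact hp.lt_one_of_le_add hb0 hb1 hint hm (ht₁.trans_le hmid) (ih _ hmid le_rfl) h
        (by push_cast at h2; linarith)
  obtain ⟨n, hn⟩ := exists_nat_ge ((t - t₁) * (m + 1))
  refine hiter n t ht ?_
  rw [mul_one_div, ← sub_le_iff_le_add', le_div_iff₀ (by positivity)]
  exact hn

end IsSubsolution

end IntegrableKernel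

section SingularAngle

variable {b : ℝ → ℝ} {p : E3 → ℝ} {x₀ : ℝ} {ξ ξ' : E3} {σ : S2}

/-- The cosine `x₀` is singular for the kernel `b` when the weight `b(x)(1 - |x|)` on the sphere is
not integrable near any direction that makes an angle of cosine `x₀` with the frequency. -/
def IsSingularAngle (b : ℝ → ℝ) (x₀ : ℝ) : Prop :=
  ∀ ξ ≠ 0, ∀ σ, cosAngle ξ σ = x₀ →
    ¬ IntegrableAtFilter (fun τ => b (cosAngle ξ τ) * (1 - |cosAngle ξ τ|)) (𝓝 σ) sphμ

lemma integrableAtFilter_comp_homeomorph {X : Type*} [TopologicalSpace X] [MeasurableSpace X]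
    [BorelSpace X] {μ : Measure X} {φ : X ≃ₜ X} (hφ : MeasurePreserving φ μ μ) {f : X → ℝ} {x : X}
    (hf : IntegrableAtFilter f (𝓝 (φ x)) μ) : IntegrableAtFilter (f ∘ φ) (𝓝 x) μ := by
  obtain ⟨s, hs, hfs⟩ := hf
  exact ⟨φ ⁻¹' s, φ.continuous.continuousAt hs,
    (hφ.integrableOn_comp_preimage φ.measurableEmbedding).2 hfs⟩

lemma exists_isSingularAngle {e : S2}
    (h : ¬ Integrable (fun σ => b (cosAngle e σ) * (1 - |cosAngle e σ|)) sphμ) :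
    ∃ x₀ ∈ Icc (-1) 1, IsSingularAngle b x₀ := by
  obtain ⟨σ₀, hσ₀⟩ : ∃ σ₀, ¬ IntegrableAtFilter
      (fun σ => b (cosAngle e σ) * (1 - |cosAngle e σ|)) (𝓝 σ₀) sphμ := by
    by_contra! hloc
    exact h (integrableOn_univ.1 (LocallyIntegrable.integrableOn_isCompact hloc isCompact_univ))
  refine ⟨cosAngle e σ₀, abs_le.1 (abs_cosAngle_le_one _ σ₀), fun ξ hξ σ hσ hint => hσ₀ ?_⟩
  obtain ⟨φ, hφ, hφσ, hcos⟩ :=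
    exists_measurePreserving_cosAngle (ne_zero_of_mem_unit_sphere e) hξ hσ.symm
  refine (integrableAtFilter_comp_homeomorph hφ (by rwa [hφσ])).congr (.of_forall fun τ => ?_)
  rw [Function.comp_apply, hcos]

lemma measurePreserving_antipode : MeasurePreserving (Homeomorph.neg S2) sphμ sphμ :=
  measurePreserving_sphereHomeomorph (LinearIsometryEquiv.neg ℝ (E := E3))

lemma cosAngle_antipode (ξ : E3) (σ : S2) : cosAngle ξ (-σ) = -cosAngle ξ σ := by
  simp [cosAngle, neg_div]

lemma IsSingularAngle.comp_neg (h : IsSingularAngle b x₀) :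
    IsSingularAngle (fun x => b (-x)) (-x₀) := fun ξ hξ σ hσ hint => by
  refine h ξ hξ (-σ) (by rw [cosAngle_antipode, hσ, neg_neg]) ?_
  have := integrableAtFilter_comp_homeomorph measurePreserving_antipode (x := -σ)
    (by simpa using hint)
  simpa [Function.comp_def, cosAngle_antipode] using this

lemma IsSingularAngle.frequently_lt (h : IsSingularAngle b x₀) (hb : Measurable b)
    (hb0 : ∀ x, 0 ≤ b x) (hξ : ξ ≠ 0) (hσ : cosAngle ξ σ = x₀) {G : S2 → ℝ}
    (hG : Integrable (fun σ => b (cosAngle ξ σ) * G σ) sphμ) {c : ℝ} (hc : 0 < c) :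
    ∃ᶠ τ in 𝓝 σ, G τ < c * (1 - |cosAngle ξ τ|) := by
  intro hle
  simp only [not_lt] at hle
  obtain ⟨s, hs, hsopen, hσs⟩ := _root_.mem_nhds_iff.1 hle
  refine h ξ hξ σ hσ ⟨s, hsopen.mem_nhds hσs, ?_⟩
  have hcos := (continuous_cosAngle ξ).measurable
  refine (hG.const_mul c⁻¹).integrableOn.mono'
    ((hb.comp hcos).mul (by fun_prop)).aestronglyMeasurable
    ((ae_restrict_mem hsopen.measurableSet).mono fun τ hτ => ?_)
  rw [norm_of_nonneg (mul_nonneg (hb0 _) (sub_nonneg.2 (abs_cosAngle_le_one ξ τ))), mul_left_comm]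
  gcongr
  · exact hb0 _
  · exact (le_inv_mul_iff₀ hc).2 (hs hτ)

lemma xiPlus_direction (hξ' : ξ' ≠ 0) (h : ‖ξ‖ = ‖ξ'‖) :
    xiPlus ξ (direction ξ' hξ') = (1 / 2 : ℝ) • (ξ + ξ') := by
  rw [xiPlus, h, div_eq_inv_mul ‖ξ'‖, ← smul_smul 2⁻¹, norm_smul_direction]
  module

lemma xiMinus_direction (hξ' : ξ' ≠ 0) (h : ‖ξ‖ = ‖ξ'‖) :
    xiMinus ξ (direction ξ' hξ') = (1 / 2 : ℝ) • (ξ - ξ') := by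
  rw [xiMinus, h, div_eq_inv_mul ‖ξ'‖, ← smul_smul 2⁻¹, norm_smul_direction]
  module

lemma defect_antipode (p : E3 → ℝ) (ξ : E3) (σ : S2) : defect p ξ (-σ) = defect p ξ σ := by
  have hswap : xiPlus ξ (-σ) = xiMinus ξ σ ∧ xiMinus ξ (-σ) = xiPlus ξ σ := by
    simp [xiPlus, xiMinus, sub_eq_add_neg]
  rw [defect, defect, hswap.1, hswap.2, mul_comm]

lemma cosAngle_direction_right (hξ : ξ ≠ 0) (hξ' : ξ' ≠ 0) {x : ℝ} (h : ‖ξ‖ = ‖ξ'‖)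
    (hinner : ⟪ξ, ξ'⟫ = x * ‖ξ‖ ^ 2) : cosAngle ξ (direction ξ' hξ') = x := by
  have hr := norm_ne_zero_iff.2 hξ
  rw [cosAngle, direction, inner_smul_right, hinner, ← h]
  field_simp

lemma IsSingularAngle.defect_eq_zero (h : IsSingularAngle b x₀) (hb : Measurable b)
    (hb0 : ∀ x, 0 ≤ b x) (hp : Continuous p) (hξ : ξ ≠ 0)
    (hint : Integrable (fun σ => b (cosAngle ξ σ) * |defect p ξ σ|) sphμ)
    (hσ : cosAngle ξ σ = x₀) : defect p ξ σ = 0 := by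
  by_contra hne
  refine h.frequently_lt hb hb0 hξ hσ hint (half_pos (abs_pos.2 hne)) ?_
  filter_upwards [(continuous_defect hp ξ).abs.continuousAt.eventually
    (lt_mem_nhds (half_lt_self (abs_pos.2 hne)))] with τ hτ
  refine not_lt.2 (le_trans ?_ hτ.le)
  exact mul_le_of_le_one_right (by positivity) (sub_le_self _ (abs_nonneg _))

lemma IsSingularAngle.eq_of_inner_eq (h : IsSingularAngle b x₀) (hb : Measurable b)
    (hb0 : ∀ x, 0 ≤ b x) (hp : IsRealCharFun p)
    (hint : ∀ ξ, Integrable (fun σ => b (cosAngle ξ σ) * |defect p ξ σ|) sphμ)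
    (hnorm : ‖ξ‖ = ‖ξ'‖) (hinner : ⟪ξ, ξ'⟫ = x₀ * ‖ξ‖ ^ 2) : p ξ = p ξ' := by
  rcases eq_or_ne ξ 0 with rfl | hξ
  · rw [norm_eq_zero.1 (hnorm.symm.trans norm_zero)]
  have hξ' : ξ' ≠ 0 := norm_ne_zero_iff.1 (hnorm ▸ norm_ne_zero_iff.2 hξ)
  have h1 := h.defect_eq_zero hb hb0 hp.continuous hξ (hint ξ)
    (cosAngle_direction_right hξ hξ' hnorm hinner)
  have h2 := h.defect_eq_zero hb hb0 hp.continuous hξ' (hint ξ')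
    (cosAngle_direction_right hξ' hξ hnorm.symm (by rw [real_inner_comm, hinner, hnorm]))
  rw [defect, xiPlus_direction _ hnorm, xiMinus_direction _ hnorm] at h1
  rw [defect, xiPlus_direction _ hnorm.symm, xiMinus_direction _ hnorm.symm, add_comm, ← neg_sub ξ,
    smul_neg, hp.neg] at h2
  linarith

end SingularAngle

section GrazingSingularity

open Asymptotics

variable {b : ℝ → ℝ} {p : E3 → ℝ} {C : ℝ} {ξ ξ' : E3} {σ : S2}

lemma sum_inner_smul_eq {e n₁ n₂ : E3} (he : ‖e‖ = 1) (hn₁ : ‖n₁‖ = 1) (hn₂ : ‖n₂‖ = 1)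
    (h₁ : ⟪e, n₁⟫ = 0) (h₂ : ⟪e, n₂⟫ = 0) (h₁₂ : ⟪n₁, n₂⟫ = 0) (η : E3) :
    ⟪e, η⟫ • e + ⟪n₁, η⟫ • n₁ + ⟪n₂, η⟫ • n₂ = η := by
  have hon : Orthonormal ℝ ![e, n₁, n₂] := by
    constructor
    · intro i; fin_cases i <;> simp [he, hn₁, hn₂]
    · intro i j hij
      fin_cases i <;> fin_cases j <;>
        simp_all [real_inner_comm]
  have hspan := hon.linearIndependent.span_eq_top_of_card_eq_finrank' (by simp)
  have hsum := (OrthonormalBasis.mk hon hspan.ge).sum_repr' η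
  simpa [Fin.sum_univ_three] using hsum

lemma xiPlus_eq_sub (ξ : E3) (σ : S2) : xiPlus ξ σ = ξ - xiMinus ξ σ := by
  unfold xiPlus xiMinus
  module

lemma xiMinus_self (hξ : ξ ≠ 0) : xiMinus ξ (direction ξ hξ) = 0 := by
  rw [xiMinus_direction hξ rfl, sub_self, smul_zero]

lemma tendsto_xiMinus (hξ : ξ ≠ 0) : Tendsto (xiMinus ξ) (𝓝 (direction ξ hξ)) (𝓝 0) := by
  simpa only [xiMinus_self] using (continuous_xiMinus ξ).tendsto (direction ξ hξ)

lemma inner_xiMinus_self (ξ : E3) (σ : S2) : ⟪ξ, xiMinus ξ σ⟫ = ‖xiMinus ξ σ‖ ^ 2 := by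
  rw [norm_xiMinus_sq, xiMinus, inner_sub_right, inner_smul_right, inner_smul_right,
    real_inner_self_eq_norm_sq, ← norm_mul_cosAngle]
  ring

lemma IsRealCharFun.isLittleO_defect_add_fderiv (hp : IsRealCharFun p)
    (hC : ∀ ξ, 1 - p ξ ≤ C * ‖ξ‖ ^ 2) (hξ : ξ ≠ 0) :
    (fun σ => defect p ξ σ + fderiv ℝ p ξ (xiMinus ξ σ)) =o[𝓝 (direction ξ hξ)] xiMinus ξ := by
  have hlim := tendsto_xiMinus hξ
  have hplus : Tendsto (xiPlus ξ) (𝓝 (direction ξ hξ)) (𝓝 ξ) := by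
    rw [show xiPlus ξ = fun σ => ξ - xiMinus ξ σ from funext (xiPlus_eq_sub ξ)]
    simpa using hlim.const_sub ξ
  have hderiv : (fun σ => p (xiPlus ξ σ) - p ξ + fderiv ℝ p ξ (xiMinus ξ σ))
      =o[𝓝 (direction ξ hξ)] xiMinus ξ := by
    refine isLittleO_neg_right.1
      (((hp.differentiable hC ξ).hasFDerivAt.isLittleO.comp_tendsto hplus).congr (fun σ => ?_)
        fun σ => ?_)
    · simp [xiPlus_eq_sub]
    · simp [xiPlus_eq_sub]
  have hquad : (fun σ => p (xiPlus ξ σ) * (p (xiMinus ξ σ) - 1)) =O[𝓝 (direction ξ hξ)]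
      fun σ => ‖xiMinus ξ σ‖ ^ 2 := by
    refine IsBigO.of_bound C (.of_forall fun σ => ?_)
    rw [norm_mul, norm_pow, norm_norm, norm_eq_abs, norm_eq_abs, abs_sub_comm,
      abs_of_nonneg (sub_nonneg.2 (hp.le_one _))]
    exact (mul_le_of_le_one_left (sub_nonneg.2 (hp.le_one _)) (hp.abs_le_one _)).trans (hC _)
  have hsq : (fun σ => ‖xiMinus ξ σ‖ ^ 2) =o[𝓝 (direction ξ hξ)] xiMinus ξ :=
    ((isLittleO_norm_pow_id one_lt_two).comp_tendsto hlim)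
  refine (hderiv.add (hquad.trans_isLittleO hsq)).congr_left fun σ => ?_
  rw [defect]
  ring

lemma mul_norm_le_of_swap {e n₁ n₂ : E3} (he : ‖e‖ = 1) (hn₁ : ‖n₁‖ = 1) (hn₂ : ‖n₂‖ = 1)
    (h₁ : ⟪e, n₁⟫ = 0) (h₂ : ⟪e, n₂⟫ = 0) (h₁₂ : ⟪n₁, n₂⟫ = 0) {R : E3 ≃ₗᵢ[ℝ] E3} (hRe : R e = e)
    (hR₁ : R n₁ = n₂) (hR₂ : R n₂ = n₁) {L : E3 →L[ℝ] ℝ} (hL : L n₂ = 0) (η : E3) :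
    |L n₁| * ‖η‖ ≤ |L η| + |L (R η)| + (|L n₁| + 2 * |L e|) * |⟪e, η⟫| := by
  have hdec := sum_inner_smul_eq he hn₁ hn₂ h₁ h₂ h₁₂ η
  have hnorm : ‖η‖ ≤ |⟪e, η⟫| + |⟪n₁, η⟫| + |⟪n₂, η⟫| := by
    conv_lhs => rw [← hdec]
    refine norm_add₃_le.trans_eq ?_
    simp only [norm_smul, he, hn₁, hn₂, mul_one, norm_eq_abs]
  have hLη : L η = ⟪e, η⟫ * L e + ⟪n₁, η⟫ * L n₁ := by
    conv_lhs => rw [← hdec]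
    simp [hL]
  have hLRη : L (R η) = ⟪e, η⟫ * L e + ⟪n₂, η⟫ * L n₁ := by
    conv_lhs => rw [← hdec]
    simp [hL, hRe, hR₁, hR₂]
  have htri : ∀ x : ℝ, |x| * |L n₁| ≤ |⟪e, η⟫ * L e + x * L n₁| + |⟪e, η⟫| * |L e| := fun x => by
    rw [← abs_mul, ← abs_mul]
    simpa using abs_sub (⟪e, η⟫ * L e + x * L n₁) (⟪e, η⟫ * L e)
  calc |L n₁| * ‖η‖ ≤ |L n₁| * (|⟪e, η⟫| + |⟪n₁, η⟫| + |⟪n₂, η⟫|) := by gcongr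
    _ ≤ _ := by
      rw [hLη, hLRη]
      linarith [htri ⟪n₁, η⟫, htri ⟪n₂, η⟫]

lemma xiMinus_sphereHomeomorph {R : E3 ≃ₗᵢ[ℝ] E3} (hR : R ξ = ξ) (σ : S2) :
    xiMinus ξ (sphereHomeomorph R σ) = R (xiMinus ξ σ) := by
  simp [xiMinus, hR]

lemma cosAngle_sphereHomeomorph {R : E3 ≃ₗᵢ[ℝ] E3} (hR : R ξ = ξ) (σ : S2) :
    cosAngle ξ (sphereHomeomorph R σ) = cosAngle ξ σ := by
  conv_lhs => rw [← hR]
  rw [cosAngle, coe_sphereHomeomorph, R.inner_map_map, R.norm_map, cosAngle]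

lemma sphereHomeomorph_direction {R : E3 ≃ₗᵢ[ℝ] E3} (hξ : ξ ≠ 0) (hR : R ξ = ξ) :
    sphereHomeomorph R (direction ξ hξ) = direction ξ hξ := by
  ext1
  simp [direction, hR]

lemma IsRealCharFun.eventually_le_abs_defect_add (hp : IsRealCharFun p)
    (hC : ∀ ξ, 1 - p ξ ≤ C * ‖ξ‖ ^ 2) (hξ : ξ ≠ 0) {R : E3 ≃ₗᵢ[ℝ] E3} (hR : R ξ = ξ)
    {a c : ℝ} (ha : 0 < a) (hL : ∀ η, a * ‖η‖ ≤ |fderiv ℝ p ξ η| + |fderiv ℝ p ξ (R η)| +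
      c * |⟪ξ, η⟫|) :
    ∀ᶠ σ in 𝓝 (direction ξ hξ),
      a / 2 * ‖xiMinus ξ σ‖ ≤ |defect p ξ σ| + |defect p ξ (sphereHomeomorph R σ)| := by
  have hlim := tendsto_xiMinus hξ
  have hlittle := hp.isLittleO_defect_add_fderiv hC hξ
  have hφ : Tendsto (sphereHomeomorph R) (𝓝 (direction ξ hξ)) (𝓝 (direction ξ hξ)) := by
    simpa only [sphereHomeomorph_direction hξ hR] using
      (sphereHomeomorph R).continuous.tendsto (direction ξ hξ)
  have hinner : (fun σ => c * ⟪ξ, xiMinus ξ σ⟫) =o[𝓝 (direction ξ hξ)] xiMinus ξ := by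
    simp_rw [inner_xiMinus_self]
    exact ((isLittleO_norm_pow_id one_lt_two).comp_tendsto hlim).const_mul_left c
  have ha6 : 0 < a / 6 := by positivity
  filter_upwards [hlittle.bound ha6, (hlittle.comp_tendsto hφ).bound ha6, hinner.bound ha6]
    with σ h1 h2 h3
  simp only [Function.comp_apply, xiMinus_sphereHomeomorph hR, R.norm_map, norm_eq_abs,
    abs_mul] at h1 h2 h3
  have htri : ∀ x y : ℝ, |y| ≤ |x| + |x + y| := fun x y => by
    simpa [add_comm] using abs_sub (x + y) x
  have hc : c * |⟪ξ, xiMinus ξ σ⟫| ≤ |c| * |⟪ξ, xiMinus ξ σ⟫| := by gcongr; exact le_abs_self c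
  linarith [hL (xiMinus ξ σ), htri (defect p ξ σ) (fderiv ℝ p ξ (xiMinus ξ σ)),
    htri (defect p ξ (sphereHomeomorph R σ)) (fderiv ℝ p ξ (R (xiMinus ξ σ)))]

lemma IsSingularAngle.not_eventually_le_abs_defect_add (h : IsSingularAngle b 1)
    (hb : Measurable b) (hb0 : ∀ x, 0 ≤ b x) (hξ : ξ ≠ 0)
    (hint : Integrable (fun σ => b (cosAngle ξ σ) * |defect p ξ σ|) sphμ)
    {R : E3 ≃ₗᵢ[ℝ] E3} (hR : R ξ = ξ) {a : ℝ} (ha : 0 < a) :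
    ¬ ∀ᶠ σ in 𝓝 (direction ξ hξ),
      a * ‖xiMinus ξ σ‖ ≤ |defect p ξ σ| + |defect p ξ (sphereHomeomorph R σ)| := by
  intro hle
  have hintR : Integrable
      (fun σ => b (cosAngle ξ σ) * |defect p ξ (sphereHomeomorph R σ)|) sphμ := by
    refine (((measurePreserving_sphereHomeomorph R).integrable_comp_emb
      (sphereHomeomorph R).measurableEmbedding).2 hint).congr (.of_forall fun σ => ?_)
    rw [Function.comp_apply, cosAngle_sphereHomeomorph hR]
  have hr : 0 < ‖ξ‖ := norm_pos_iff.2 hξ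
  refine h.frequently_lt hb hb0 hξ (cosAngle_self hξ)
    (G := fun σ => |defect p ξ σ| + |defect p ξ (sphereHomeomorph R σ)|)
    ((hint.add hintR).congr (.of_forall fun σ => (mul_add _ _ _).symm))
    (c := a * ‖ξ‖ / 2) (by positivity) (hle.mono fun σ hσ => not_lt.2 ?_)
  calc a * ‖ξ‖ / 2 * (1 - |cosAngle ξ σ|) ≤ a * ‖ξ‖ / 2 * (1 - cosAngle ξ σ) := by
        gcongr
        exact le_abs_self _
    _ = a * (‖xiMinus ξ σ‖ ^ 2 / ‖ξ‖) := by
        rw [norm_xiMinus_sq]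
        field_simp
    _ ≤ a * ‖xiMinus ξ σ‖ := by
        gcongr
        rw [div_le_iff₀ hr, pow_two]
        gcongr
        exact norm_xiMinus_le ξ σ
    _ ≤ _ := hσ

lemma IsSingularAngle.fderiv_eq_zero (h : IsSingularAngle b 1) (hb : Measurable b)
    (hb0 : ∀ x, 0 ≤ b x) (hp : IsRealCharFun p) (hC : ∀ ξ, 1 - p ξ ≤ C * ‖ξ‖ ^ 2) (hξ : ξ ≠ 0)
    (hint : Integrable (fun σ => b (cosAngle ξ σ) * |defect p ξ σ|) sphμ) (hinner : ⟪ξ, ξ'⟫ = 0) :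
    fderiv ℝ p ξ ξ' = 0 := by
  set L := fderiv ℝ p ξ
  set e : E3 := (direction ξ hξ).1
  have hξe : ‖ξ‖ • e = ξ := norm_smul_direction hξ
  have he : ‖e‖ = 1 := norm_eq_of_mem_sphere _
  obtain ⟨n₂, hn₂, h₂, hw⟩ := exists_unit_orthogonal_pair two_lt_finrank_E3 e
    ((InnerProductSpace.toDual ℝ E3).symm L)
  obtain ⟨n₁, hn₁, h₁, h₁₂⟩ := exists_unit_orthogonal_pair two_lt_finrank_E3 e n₂
  rw [real_inner_comm] at h₁ h₂ hw
  rw [InnerProductSpace.toDual_symm_apply] at hw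
  have hdec := sum_inner_smul_eq he hn₁ hn₂ h₁ h₂ h₁₂ ξ'
  suffices hL : L n₁ = 0 by
    have hξ' : ⟪e, ξ'⟫ = 0 := by
      rw [← hξe, inner_smul_left] at hinner
      exact (mul_eq_zero.1 hinner).resolve_left (norm_ne_zero_iff.2 hξ)
    rw [← hdec]
    simp [hL, hw, hξ']
  -- The swap of `n₁` and `n₂` compensates the directions in which `L` vanishes.
  obtain ⟨R, hR₁, hR₂, hfix⟩ := exists_linearIsometryEquiv_swap (hn₁.trans hn₂.symm)
  have hRe : R e = e := hfix e (h₁.trans h₂.symm)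
  have hRξ : R ξ = ξ := by rw [← hξe, map_smul, hRe]
  by_contra hL
  have ha : 0 < |L n₁| := abs_pos.2 hL
  refine h.not_eventually_le_abs_defect_add hb hb0 hξ hint hRξ (half_pos ha)
    (hp.eventually_le_abs_defect_add hC hξ hRξ (c := (|L n₁| + 2 * |L e|) / ‖ξ‖) ha fun η => ?_)
  refine (mul_norm_le_of_swap he hn₁ hn₂ h₁ h₂ h₁₂ hRe hR₁ hR₂ hw η).trans_eq ?_
  have hη : ⟪ξ, η⟫ = ‖ξ‖ * ⟪e, η⟫ := by
    conv_lhs => rw [← hξe, inner_smul_left, conj_trivial]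
  rw [hη, abs_mul, abs_norm, ← mul_assoc, div_mul_cancel₀ _ (norm_ne_zero_iff.2 hξ)]

lemma eq_of_inner_eq_zero (hp : Differentiable ℝ p)
    (hfderiv : ∀ ξ ≠ 0, ∀ η, ⟪ξ, η⟫ = 0 → fderiv ℝ p ξ η = 0) (hnorm : ‖ξ‖ = ‖ξ'‖)
    (hinner : ⟪ξ, ξ'⟫ = 0) : p ξ = p ξ' := by
  rcases eq_or_ne ξ 0 with rfl | hξ
  · rw [norm_eq_zero.1 (hnorm.symm.trans norm_zero)]
  set γ : ℝ → E3 := fun θ => cos θ • ξ + sin θ • ξ'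
  have hγ : ∀ θ, HasDerivAt γ (-sin θ • ξ + cos θ • ξ') θ := fun θ =>
    ((hasDerivAt_cos θ).smul_const ξ).add ((hasDerivAt_sin θ).smul_const ξ')
  have hγsq : ∀ θ, ‖γ θ‖ ^ 2 = ‖ξ‖ ^ 2 := fun θ => by
    rw [norm_add_sq_real, inner_smul_left, inner_smul_right, hinner, norm_smul, norm_smul, mul_pow,
      mul_pow, ← hnorm, norm_eq_abs, norm_eq_abs, sq_abs, sq_abs]
    linear_combination ‖ξ‖ ^ 2 * sin_sq_add_cos_sq θ
  have hderiv : ∀ θ, HasDerivAt (p ∘ γ) 0 θ := fun θ => by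
    have hγ0 : γ θ ≠ 0 := norm_ne_zero_iff.1 fun h0 => by
      have := hγsq θ
      rw [h0, zero_pow two_ne_zero, eq_comm, sq_eq_zero_iff] at this
      exact norm_ne_zero_iff.2 hξ this
    have horth : ⟪γ θ, -sin θ • ξ + cos θ • ξ'⟫ = 0 := by
      simp only [γ, inner_add_left, inner_add_right, inner_smul_left, inner_smul_right,
        real_inner_self_eq_norm_sq, hinner, real_inner_comm ξ ξ', ← hnorm, conj_trivial]
      ring
    exact ((hp _).hasFDerivAt.comp_hasDerivAt θ (hγ θ)).congr_deriv (hfderiv _ hγ0 _ horth)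
  have hconst := is_const_of_deriv_eq_zero (fun θ => (hderiv θ).differentiableAt)
    (fun θ => (hderiv θ).deriv) 0 (π / 2)
  simpa [γ] using hconst

end GrazingSingularity

section QuadraticForm

open Asymptotics

variable {E : Type*} [NormedAddCommGroup E] [InnerProductSpace ℝ E] {B : E →L[ℝ] E →L[ℝ] ℝ}
  {x : ℝ}

lemma tendsto_one_sub_div_sq {p : E → ℝ}
    (hB : (fun ξ => 1 - p ξ - B ξ ξ) =o[𝓝 0] fun ξ => ‖ξ‖ ^ 2) {e : E} (he : ‖e‖ = 1) :
    Tendsto (fun r : ℝ => (1 - p (r • e)) / r ^ 2) (𝓝[≠] 0) (𝓝 (B e e)) := by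
  have hray : Tendsto (fun r : ℝ => r • e) (𝓝[≠] 0) (𝓝 0) :=
    tendsto_nhdsWithin_of_tendsto_nhds
      (by simpa using (tendsto_id (x := 𝓝 (0 : ℝ))).smul_const e)
  have hlim := (hB.comp_tendsto hray).tendsto_div_nhds_zero.add_const (B e e)
  rw [zero_add] at hlim
  refine hlim.congr' (eventually_mem_nhdsWithin.mono fun r hr => ?_)
  have hr0 : r ≠ 0 := hr
  simp only [Function.comp_apply, map_smul, smul_apply, smul_eq_mul, norm_smul,
    he, norm_eq_abs, mul_one, sq_abs]
  field_simp
  ring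

lemma apply_add_apply_eq_zero (hx : x ∈ Ioo (-1) 1)
    (hB : ∀ e σ : E, ‖e‖ = 1 → ‖σ‖ = 1 → ⟪e, σ⟫ = x → B e e = B σ σ) {u v : E} (hu : ‖u‖ = 1)
    (hv : ‖v‖ = 1) (huv : ⟪u, v⟫ = 0) : B u v + B v u = 0 := by
  have hadd : 0 < (1 + x) / 2 := by linarith [hx.1]
  have hsub : 0 < (1 - x) / 2 := by linarith [hx.2]
  set α := √((1 + x) / 2)
  set β := √((1 - x) / 2)
  have hα : α ^ 2 = (1 + x) / 2 := sq_sqrt hadd.le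
  have hβ : β ^ 2 = (1 - x) / 2 := sq_sqrt hsub.le
  have huv' : ⟪v, u⟫ = 0 := by rw [real_inner_comm, huv]
  have hunit : ∀ γ : ℝ, γ ^ 2 = β ^ 2 → ‖α • u + γ • v‖ = 1 := fun γ hγ => by
    rw [← sq_eq_sq₀ (norm_nonneg _) zero_le_one, norm_add_sq_real, norm_smul, norm_smul,
      inner_smul_left, inner_smul_right, huv, hu, hv, mul_one, mul_one, norm_eq_abs, norm_eq_abs,
      sq_abs, sq_abs, hγ, hα, hβ]
    ring
  have heq := hB (α • u + β • v) (α • u + (-β) • v) (hunit β rfl) (hunit (-β) (neg_sq β)) (by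
    simp only [inner_add_left, inner_add_right, inner_smul_left, inner_smul_right,
      real_inner_self_eq_norm_sq, huv, huv', hu, hv, conj_trivial]
    linear_combination hα - hβ)
  simp only [map_add, map_smul, add_apply, smul_apply,
    smul_eq_mul] at heq
  have hαβ : α * β ≠ 0 := mul_ne_zero (sqrt_pos.2 hadd).ne' (sqrt_pos.2 hsub).ne'
  refine (mul_eq_zero.1 ?_).resolve_left hαβ
  linear_combination heq / 2

lemma apply_self_eq_of_orthonormal (hx : x ∈ Ioo (-1) 1)
    (hB : ∀ e σ : E, ‖e‖ = 1 → ‖σ‖ = 1 → ⟪e, σ⟫ = x → B e e = B σ σ) {u v : E} (hu : ‖u‖ = 1)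
    (hv : ‖v‖ = 1) (huv : ⟪u, v⟫ = 0) : B u u = B v v := by
  have hs : (√2)⁻¹ ^ 2 = (1 / 2 : ℝ) := by rw [inv_pow, sq_sqrt zero_le_two, one_div]
  have hunit : ∀ w : E, ‖w‖ ^ 2 = 2 → ‖(√2)⁻¹ • w‖ = 1 := fun w hw => by
    rw [← sq_eq_sq₀ (norm_nonneg _) zero_le_one, norm_smul, mul_pow, hw, norm_eq_abs, sq_abs, hs]
    norm_num
  -- The form vanishes on the orthonormal pair `(u ± v)/√2`.
  have hpolar := apply_add_apply_eq_zero hx hB (u := (√2)⁻¹ • (u + v)) (v := (√2)⁻¹ • (u - v))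
    (hunit _ (by rw [norm_add_sq_real, hu, hv, huv]; norm_num))
    (hunit _ (by rw [norm_sub_sq_real, hu, hv, huv]; norm_num))
    (by
      rw [inner_smul_left, inner_smul_right, inner_add_left, inner_sub_right, inner_sub_right,
        real_inner_self_eq_norm_sq, real_inner_self_eq_norm_sq, hu, hv, real_inner_comm u v]
      simp)
  simp only [map_add, map_sub, map_smul, add_apply, smul_eq_mul,
    sub_apply, smul_apply] at hpolar
  linear_combination hpolar - 2 * (B u u - B v v) * hs

lemma exists_apply_self_eq_mul_norm_sq [FiniteDimensional ℝ E] (hE : 2 < Module.finrank ℝ E)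
    (hx : x ∈ Ioo (-1) 1)
    (hB : ∀ e σ : E, ‖e‖ = 1 → ‖σ‖ = 1 → ⟪e, σ⟫ = x → B e e = B σ σ) :
    ∃ l, ∀ ξ, B ξ ξ = l * ‖ξ‖ ^ 2 := by
  obtain ⟨e, he, -, -⟩ := exists_unit_orthogonal_pair hE (0 : E) 0
  refine ⟨B e e, fun ξ => ?_⟩
  rcases eq_or_ne ξ 0 with rfl | hξ
  · simp
  set u := ‖ξ‖⁻¹ • ξ
  have hu : ‖u‖ = 1 := norm_smul_inv_norm (𝕜 := ℝ) hξ
  obtain ⟨n, hn, hnu, hne⟩ := exists_unit_orthogonal_pair hE u e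
  have hξu : ξ = ‖ξ‖ • u := (smul_inv_smul₀ (norm_ne_zero_iff.2 hξ) ξ).symm
  have hue : B u u = B e e := (apply_self_eq_of_orthonormal hx hB hn hu hnu).symm.trans
    (apply_self_eq_of_orthonormal hx hB hn he hne)
  calc B ξ ξ = B (‖ξ‖ • u) (‖ξ‖ • u) := by rw [← hξu]
    _ = B e e * ‖ξ‖ ^ 2 := by
      simp only [map_smul, smul_apply, smul_eq_mul, hue]
      ring

end QuadraticForm

section MinimalZero

lemma exists_minimal_zero {E : Type*} [NormedAddCommGroup E] [NormedSpace ℝ E]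
    [FiniteDimensional ℝ E] {h : E → ℝ} (hcont : Continuous h) (h0 : 0 ≤ h 0)
    (hpos : ∀ᶠ ξ in 𝓝[≠] 0, 0 < h ξ) {ξ₁ : E} (hξ₁ : ξ₁ ≠ 0) (hle : h ξ₁ ≤ 0) :
    ∃ ξ ≠ 0, h ξ = 0 ∧ (∀ η ≠ 0, ‖η‖ < ‖ξ‖ → 0 < h η) ∧ ∀ η, ‖η‖ ≤ ‖ξ‖ → 0 ≤ h η := by
  obtain ⟨δ, hδ, hball⟩ := Metric.mem_nhdsWithin_iff.1 hpos
  have hfar : ∀ η ≠ 0, h η ≤ 0 → η ∉ ball 0 δ := fun η hη hη0 hmem =>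
    hη0.not_gt (hball ⟨hmem, hη⟩)
  set S := (closedBall (0 : E) ‖ξ₁‖ \ ball 0 δ) ∩ {ξ | h ξ ≤ 0}
  have hS : IsCompact S := ((isCompact_closedBall 0 _).diff isOpen_ball).inter_right
    (isClosed_le hcont continuous_const)
  obtain ⟨ξ, ⟨⟨hξ₁', hξδ⟩, hξ⟩, hmin⟩ := hS.exists_isMinOn
    ⟨ξ₁, ⟨mem_closedBall_zero_iff.2 le_rfl, hfar ξ₁ hξ₁ hle⟩, hle⟩ continuous_norm.continuousOn
  have hξ0 : ξ ≠ 0 := fun h => hξδ (h ▸ mem_ball_self hδ)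
  have hlt : ∀ η ≠ 0, ‖η‖ < ‖ξ‖ → 0 < h η := fun η hη hηξ => by
    by_contra! hη0
    exact hηξ.not_ge (isMinOn_iff.1 hmin η ⟨⟨mem_closedBall_zero_iff.2
      (hηξ.le.trans (mem_closedBall_zero_iff.1 hξ₁')), hfar η hη hη0⟩, hη0⟩)
  have hnonneg : closedBall 0 ‖ξ‖ ⊆ {η | 0 ≤ h η} := by
    rw [← closure_ball 0 (norm_ne_zero_iff.2 hξ0)]
    refine closure_minimal (fun η hη => ?_) (isClosed_le continuous_const hcont)
    rcases eq_or_ne η 0 with rfl | hη0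
    · exact h0
    · exact (hlt η hη0 (mem_ball_zero_iff.1 hη)).le
  exact ⟨ξ, hξ0, le_antisymm hξ (hnonneg (mem_closedBall_zero_iff.2 le_rfl)), hlt,
    fun η hη => hnonneg (mem_closedBall_zero_iff.2 hη)⟩

variable {b : ℝ → ℝ} {p h : E3 → ℝ} {x₀ κ : ℝ} {ξ : E3}

lemma exists_cosAngle_eq (hξ : ξ ≠ 0) (hx₀ : x₀ ∈ Icc (-1) 1) : ∃ σ, cosAngle ξ σ = x₀ := by
  have : PreconnectedSpace S2 :=
    Subtype.preconnectedSpace (isPreconnected_sphere one_lt_rank_E3 0 1)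
  refine mem_range_of_exists_le_of_exists_ge (continuous_cosAngle ξ)
    ⟨-direction ξ hξ, ?_⟩ ⟨direction ξ hξ, ?_⟩
  · rw [cosAngle_antipode, cosAngle_self]
    exact hx₀.1
  · rw [cosAngle_self]
    exact hx₀.2

lemma exists_mul_one_sub_abs_cosAngle_le (hcont : Continuous h) (hκ : 0 < κ)
    (hcoercive : ∀ᶠ η in 𝓝 0, κ * ‖η‖ ^ 2 ≤ h η) (hξ : ξ ≠ 0)
    (hpos : ∀ η ≠ 0, ‖η‖ < ‖ξ‖ → 0 < h η) {σ₀ : S2} (hσ₀ : -1 < cosAngle ξ σ₀) :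
    ∃ c > 0, ∀ᶠ σ in 𝓝 σ₀, c * (1 - |cosAngle ξ σ|) ≤ h (xiMinus ξ σ) := by
  have hlim : Tendsto (xiMinus ξ) (𝓝 σ₀) (𝓝 (xiMinus ξ σ₀)) := (continuous_xiMinus ξ).tendsto σ₀
  have hr : 0 < ‖ξ‖ := norm_pos_iff.2 hξ
  rcases eq_or_ne (xiMinus ξ σ₀) 0 with h0 | h0
  · refine ⟨κ * ‖ξ‖ ^ 2 / 2, by positivity, ?_⟩
    filter_upwards [(h0 ▸ hlim).eventually hcoercive] with σ hσ
    calc κ * ‖ξ‖ ^ 2 / 2 * (1 - |cosAngle ξ σ|) ≤ κ * ‖ξ‖ ^ 2 / 2 * (1 - cosAngle ξ σ) := by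
          gcongr
          exact le_abs_self _
      _ = κ * ‖xiMinus ξ σ‖ ^ 2 := by
          rw [norm_xiMinus_sq]
          ring
      _ ≤ _ := hσ
  · have hlt : ‖xiMinus ξ σ₀‖ < ‖ξ‖ := by
      refine lt_of_pow_lt_pow_left₀ 2 hr.le ?_
      rw [norm_xiMinus_sq]
      exact mul_lt_of_lt_one_right (by positivity) (by linarith)
    have hpos' := hpos _ h0 hlt
    refine ⟨h (xiMinus ξ σ₀) / 2, half_pos hpos', ?_⟩
    filter_upwards [((hcont.tendsto _).comp hlim).eventually (lt_mem_nhds (half_lt_self hpos'))]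
      with σ hσ
    exact (mul_le_of_le_one_right (half_pos hpos').le (sub_le_self _ (abs_nonneg _))).trans
      (le_of_lt hσ)

lemma IsSingularAngle.pos_of_mul_norm_sq_le (hx : IsSingularAngle b x₀) (hx₀ : x₀ ∈ Ioc (-1) 1)
    (hb : Measurable b) (hb0 : ∀ x, 0 ≤ b x)
    (hint : ∀ ξ, Integrable (fun σ => b (cosAngle ξ σ) * |defect p ξ σ|) sphμ)
    (hcont : Continuous h) (hκ : 0 < κ) (hcoercive : ∀ᶠ η in 𝓝 0, κ * ‖η‖ ^ 2 ≤ h η)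
    (hdefect : ∀ ξ, h ξ = 0 → (∀ η, ‖η‖ ≤ ‖ξ‖ → 0 ≤ h η) →
      ∃ C, ∀ σ, h (xiMinus ξ σ) ≤ C * |defect p ξ σ|) (hξ : ξ ≠ 0) : 0 < h ξ := by
  by_contra! hle
  have h0 : 0 ≤ h 0 := by simpa using hcoercive.self_of_nhds
  have hpos : ∀ᶠ η in 𝓝[≠] 0, 0 < h η := by
    filter_upwards [nhdsWithin_le_nhds hcoercive, self_mem_nhdsWithin] with η hη hη0
    exact (mul_pos hκ (pow_pos (norm_pos_iff.2 hη0) 2)).trans_le hη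
  obtain ⟨ζ, hζ, hzero, hlt, hnonneg⟩ := exists_minimal_zero hcont h0 hpos hξ hle
  obtain ⟨C, hC⟩ := hdefect ζ hzero hnonneg
  obtain ⟨σ₀, hσ₀⟩ := exists_cosAngle_eq hζ ⟨hx₀.1.le, hx₀.2⟩
  obtain ⟨c, hc, hev⟩ :=
    exists_mul_one_sub_abs_cosAngle_le hcont hκ hcoercive hζ hlt (hσ₀ ▸ hx₀.1)
  have hG : Integrable (fun σ => b (cosAngle ζ σ) * (C * |defect p ζ σ|)) sphμ :=
    ((hint ζ).const_mul C).congr (.of_forall fun σ => mul_left_comm _ _ _)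
  exact hx.frequently_lt hb hb0 hζ hσ₀ hG hc
    (hev.mono fun σ hσ => not_lt.2 (hσ.trans (hC σ)))

end MinimalZero

section Gaussian

open Asymptotics

variable {b : ℝ → ℝ} {p : E3 → ℝ} {x₀ l μ C : ℝ} {ξ : E3}

lemma defect_exp (μ : ℝ) (ξ : E3) (σ : S2) : defect (fun ξ => exp (-μ * ‖ξ‖ ^ 2)) ξ σ = 0 := by
  rw [defect, ← exp_add, ← mul_add, norm_xiPlus_sq_add, sub_self]

lemma isLittleO_exp_sub_sub (hp : (fun ξ => 1 - p ξ - l * ‖ξ‖ ^ 2) =o[𝓝 0] fun ξ => ‖ξ‖ ^ 2) :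
    (fun ξ => exp (-μ * ‖ξ‖ ^ 2) - p ξ - (l - μ) * ‖ξ‖ ^ 2) =o[𝓝 0] fun ξ => ‖ξ‖ ^ 2 := by
  have hderiv : HasDerivAt (fun y : ℝ => exp (-μ * y)) (-μ) 0 := by
    simpa using ((hasDerivAt_id (0 : ℝ)).const_mul (-μ)).exp
  have hlim : Tendsto (fun ξ : E3 => ‖ξ‖ ^ 2) (𝓝 0) (𝓝 0) :=
    Continuous.tendsto' (by fun_prop) _ _ (by simp)
  have hexp : (fun ξ : E3 => exp (-μ * ‖ξ‖ ^ 2) - 1 + μ * ‖ξ‖ ^ 2) =o[𝓝 0] fun ξ => ‖ξ‖ ^ 2 :=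
    (hderiv.isLittleO.comp_tendsto hlim).congr (fun ξ => by simp; ring) fun ξ => by simp
  exact (hexp.add hp).congr_left fun ξ => by ring

lemma eventually_mul_norm_sq_le {h : E3 → ℝ} {a κ : ℝ}
    (hh : (fun ξ => h ξ - a * ‖ξ‖ ^ 2) =o[𝓝 0] fun ξ => ‖ξ‖ ^ 2) (hκ : κ < a) :
    ∀ᶠ ξ in 𝓝 0, κ * ‖ξ‖ ^ 2 ≤ h ξ := by
  filter_upwards [hh.bound (sub_pos.2 hκ)] with ξ hξ
  rw [norm_eq_abs, norm_pow, norm_norm] at hξ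
  linarith [(abs_le.1 hξ).1]

lemma one_le_exp_mul_exp_xiPlus (μ : ℝ) (ξ : E3) (σ : S2) :
    1 ≤ exp (|μ| * ‖ξ‖ ^ 2) * exp (-μ * ‖xiPlus ξ σ‖ ^ 2) := by
  rw [← exp_add]
  refine one_le_exp ?_
  have h1 : ‖xiPlus ξ σ‖ ^ 2 ≤ ‖ξ‖ ^ 2 := pow_le_pow_left₀ (norm_nonneg _) (norm_xiPlus_le ξ σ) 2
  have h2 : μ * ‖xiPlus ξ σ‖ ^ 2 ≤ |μ| * ‖ξ‖ ^ 2 := by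
    gcongr
    exact le_abs_self μ
  linarith

lemma sub_le_mul_defect_sub_defect {q₁ q₂ : E3 → ℝ} (h₁ : ∀ η, 0 ≤ q₁ η) (heq : q₁ ξ = q₂ ξ)
    (hle : ∀ η, ‖η‖ ≤ ‖ξ‖ → q₁ η ≤ q₂ η) {σ : S2} {K : ℝ} (hK0 : 0 ≤ K)
    (hK : 1 ≤ K * q₂ (xiPlus ξ σ)) :
    q₂ (xiMinus ξ σ) - q₁ (xiMinus ξ σ) ≤ K * (defect q₂ ξ σ - defect q₁ ξ σ) := by
  calc q₂ (xiMinus ξ σ) - q₁ (xiMinus ξ σ)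
      ≤ K * q₂ (xiPlus ξ σ) * (q₂ (xiMinus ξ σ) - q₁ (xiMinus ξ σ)) :=
        le_mul_of_one_le_left (sub_nonneg.2 (hle _ (norm_xiMinus_le ξ σ))) hK
    _ ≤ K * (defect q₂ ξ σ - defect q₁ ξ σ) := by
        rw [mul_assoc]
        gcongr
        rw [defect, defect, heq]
        linarith [mul_le_mul_of_nonneg_right (hle _ (norm_xiPlus_le ξ σ)) (h₁ (xiMinus ξ σ))]

lemma exp_sub_le_mul_abs_defect (hp0 : ∀ ξ, 0 ≤ p ξ) (hξ : p ξ = exp (-μ * ‖ξ‖ ^ 2))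
    (hle : ∀ η, ‖η‖ ≤ ‖ξ‖ → p η ≤ exp (-μ * ‖η‖ ^ 2)) (σ : S2) :
    exp (-μ * ‖xiMinus ξ σ‖ ^ 2) - p (xiMinus ξ σ) ≤ exp (|μ| * ‖ξ‖ ^ 2) * |defect p ξ σ| := by
  refine (sub_le_mul_defect_sub_defect hp0 hξ hle (exp_pos _).le
    (one_le_exp_mul_exp_xiPlus μ ξ σ)).trans ?_
  rw [defect_exp, zero_sub]
  gcongr
  exact neg_le_abs _

lemma sub_exp_le_mul_abs_defect (hξ : p ξ = exp (-μ * ‖ξ‖ ^ 2))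
    (hle : ∀ η, ‖η‖ ≤ ‖ξ‖ → exp (-μ * ‖η‖ ^ 2) ≤ p η) (σ : S2) :
    p (xiMinus ξ σ) - exp (-μ * ‖xiMinus ξ σ‖ ^ 2) ≤ exp (|μ| * ‖ξ‖ ^ 2) * |defect p ξ σ| := by
  refine (sub_le_mul_defect_sub_defect (q₁ := fun η => exp (-μ * ‖η‖ ^ 2))
    (fun η => (exp_pos _).le) hξ.symm hle (exp_pos _).le
    ((one_le_exp_mul_exp_xiPlus μ ξ σ).trans
      (by gcongr; exact hle _ (norm_xiPlus_le ξ σ)))).trans ?_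
  rw [defect_exp, sub_zero]
  gcongr
  exact le_abs_self _

namespace IsSingularAngle

lemma eq_exp (h : IsSingularAngle b x₀) (hx₀ : x₀ ∈ Ioc (-1) 1) (hb : Measurable b)
    (hb0 : ∀ x, 0 ≤ b x) (hcont : Continuous p) (hp0 : ∀ ξ, 0 ≤ p ξ)
    (hint : ∀ ξ, Integrable (fun σ => b (cosAngle ξ σ) * |defect p ξ σ|) sphμ)
    (hl : (fun ξ => 1 - p ξ - l * ‖ξ‖ ^ 2) =o[𝓝 0] fun ξ => ‖ξ‖ ^ 2) (hξ : ξ ≠ 0) :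
    p ξ = exp (-l * ‖ξ‖ ^ 2) := by
  have hlim : Tendsto (fun μ => exp (-μ * ‖ξ‖ ^ 2)) (𝓝 l) (𝓝 (exp (-l * ‖ξ‖ ^ 2))) :=
    Continuous.tendsto (by fun_prop) l
  have hupper : ∀ μ < l, p ξ < exp (-μ * ‖ξ‖ ^ 2) := fun μ hμ =>
    sub_pos.1 (h.pos_of_mul_norm_sq_le (κ := (l - μ) / 2) hx₀ hb hb0 hint (by fun_prop)
      (by linarith) (eventually_mul_norm_sq_le (isLittleO_exp_sub_sub hl) (by linarith))
      (fun ζ hζ hle => ⟨_, exp_sub_le_mul_abs_defect hp0 (sub_eq_zero.1 hζ).symm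
        fun η hη => sub_nonneg.1 (hle η hη)⟩) hξ)
  have hlower : ∀ μ > l, exp (-μ * ‖ξ‖ ^ 2) < p ξ := fun μ hμ =>
    sub_pos.1 (h.pos_of_mul_norm_sq_le (κ := (μ - l) / 2) hx₀ hb hb0 hint (by fun_prop)
      (by linarith)
      (eventually_mul_norm_sq_le (a := μ - l)
        ((isLittleO_exp_sub_sub (μ := μ) hl).neg_left.congr_left fun ζ => by ring) (by linarith))
      (fun ζ hζ hle => ⟨_, sub_exp_le_mul_abs_defect (sub_eq_zero.1 hζ)
        fun η hη => sub_nonneg.1 (hle η hη)⟩) hξ)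
  refine le_antisymm ?_ ?_
  · exact ge_of_tendsto (hlim.mono_left (nhdsWithin_le_nhds (s := Iio l)))
      (eventually_mem_nhdsWithin.mono fun μ hμ => (hupper μ hμ).le)
  · exact le_of_tendsto (hlim.mono_left (nhdsWithin_le_nhds (s := Ioi l)))
      (eventually_mem_nhdsWithin.mono fun μ hμ => (hlower μ hμ).le)

lemma exists_forall_eq_of_inner_eq (h : IsSingularAngle b x₀) (hx₀ : x₀ ∈ Ioc (-1) 1)
    (hb : Measurable b) (hb0 : ∀ x, 0 ≤ b x) (hp : IsRealCharFun p)
    (hC : ∀ ξ, 1 - p ξ ≤ C * ‖ξ‖ ^ 2)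
    (hint : ∀ ξ, Integrable (fun σ => b (cosAngle ξ σ) * |defect p ξ σ|) sphμ) :
    ∃ x ∈ Ioo (-1 : ℝ) 1, ∀ ξ ξ' : E3, ‖ξ‖ = ‖ξ'‖ → ⟪ξ, ξ'⟫ = x * ‖ξ‖ ^ 2 → p ξ = p ξ' := by
  rcases hx₀.2.lt_or_eq with hlt | rfl
  · exact ⟨x₀, ⟨hx₀.1, hlt⟩, fun ξ ξ' => h.eq_of_inner_eq hb hb0 hp hint⟩
  · refine ⟨0, by norm_num, fun ξ ξ' hnorm hinner => ?_⟩
    exact eq_of_inner_eq_zero (hp.differentiable hC)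
      (fun ξ hξ η hη => h.fderiv_eq_zero hb hb0 hp hC hξ (hint ξ) hη) hnorm (by simpa using hinner)

lemma exists_eq_exp_of_ne_neg_one (h : IsSingularAngle b x₀) (hx₀ : x₀ ∈ Ioc (-1) 1)
    (hb : Measurable b) (hb0 : ∀ x, 0 ≤ b x) (hp : IsRealCharFun p) (hp0 : ∀ ξ, 0 ≤ p ξ)
    (hC : ∀ ξ, 1 - p ξ ≤ C * ‖ξ‖ ^ 2)
    (hint : ∀ ξ, Integrable (fun σ => b (cosAngle ξ σ) * |defect p ξ σ|) sphμ) :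
    ∃ l, ∀ ξ, p ξ = exp (-l * ‖ξ‖ ^ 2) := by
  obtain ⟨x, hx, heq⟩ := h.exists_forall_eq_of_inner_eq hx₀ hb hb0 hp hC hint
  obtain ⟨B, hB⟩ := hp.exists_bilin_isLittleO hC
  obtain ⟨l, hl⟩ := exists_apply_self_eq_mul_norm_sq two_lt_finrank_E3 hx (B := B)
    fun e σ he hσ heσ => by
      refine tendsto_nhds_unique (tendsto_one_sub_div_sq hB he)
        ((tendsto_one_sub_div_sq hB hσ).congr fun r => ?_)
      rw [heq (r • e) (r • σ) (by rw [norm_smul, norm_smul, he, hσ])]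
      rw [inner_smul_left, inner_smul_right, heσ, norm_smul, he, mul_one, norm_eq_abs, sq_abs,
        conj_trivial]
      ring
  refine ⟨l, fun ξ => ?_⟩
  rcases eq_or_ne ξ 0 with rfl | hξ
  · simp [hp.apply_zero]
  · exact h.eq_exp hx₀ hb hb0 hp.continuous hp0 hint (hB.congr_left fun ξ => by rw [hl]) hξ

lemma exists_eq_exp (h : IsSingularAngle b x₀) (hx₀ : x₀ ∈ Icc (-1) 1)
    (hb : Measurable b) (hb0 : ∀ x, 0 ≤ b x) (hp : IsRealCharFun p) (hp0 : ∀ ξ, 0 ≤ p ξ)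
    (hC : ∀ ξ, 1 - p ξ ≤ C * ‖ξ‖ ^ 2)
    (hint : ∀ ξ, Integrable (fun σ => b (cosAngle ξ σ) * |defect p ξ σ|) sphμ) :
    ∃ l, ∀ ξ, p ξ = exp (-l * ‖ξ‖ ^ 2) := by
  rcases hx₀.1.lt_or_eq with hlt | rfl
  · exact h.exists_eq_exp_of_ne_neg_one ⟨hlt, hx₀.2⟩ hb hb0 hp hp0 hC hint
  -- The substitution `σ ↦ -σ` exchanges `ξ⁺` and `ξ⁻`.
  refine h.comp_neg.exists_eq_exp_of_ne_neg_one (by norm_num) (hb.comp measurable_neg)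
    (fun x => hb0 _) hp hp0 hC fun ξ => ?_
  refine ((measurePreserving_antipode.integrable_comp_emb
    (Homeomorph.neg S2).measurableEmbedding).2 (hint ξ)).congr (.of_forall fun σ => ?_)
  simp [cosAngle_antipode, defect_antipode]

end IsSingularAngle

end Gaussian

section NonCollapse

namespace IsSubsolution

variable {b : ℝ → ℝ} {p : ℝ → E3 → ℝ} {t t₁ : ℝ} {ξ ξ₀ : E3}

lemma lt_one_of_lt_one (hp : IsSubsolution b p) (hb0 : ∀ x, 0 ≤ b x)
    (hb1 : ∀ᶠ x in 𝓝[<] 1, 0 < b x) (ht : 0 < t) (h : p t ξ₀ < 1) : ∀ ξ ≠ 0, p t ξ < 1 :=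
  fun ξ hξ => (hp.le_one ht.le ξ).lt_of_ne fun h1 =>
    h.ne (hp.eq_one_of_eq_one hb0 hb1 ht hξ h1 ξ₀)

lemma exists_lt_one_of_init_lt_one (hp : IsSubsolution b p) (h : p 0 ξ₀ < 1) (ht : 0 < t) :
    ∃ t₁ ∈ Ioc 0 t, p t₁ ξ₀ < 1 := by
  obtain ⟨d, -, hder⟩ := hp.exists_hasDerivWithinAt 0 le_rfl ξ₀
  have hev := hder.continuousWithinAt.mono Ioi_subset_Ici_self |>.eventually_lt_const h
  exact (hev.and (Ioc_mem_nhdsGT ht)).exists.imp fun _ => And.symm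

lemma antitoneOn_of_defect_eq_zero (hp : IsSubsolution b p)
    (h : ∀ t > 0, ∀ σ, defect (p t) ξ σ = 0) : AntitoneOn (fun τ => p τ ξ) (Ici 0) := by
  have hder : ∀ τ > 0, ∃ d ≤ 0, HasDerivAt (fun τ => p τ ξ) d τ := fun τ hτ => by
    obtain ⟨d, hd, hder⟩ := hp.exists_hasDerivAt hτ ξ
    exact ⟨d, by simpa [h τ hτ] using hd, hder⟩
  refine antitoneOn_of_deriv_nonpos (convex_Ici 0) (fun τ hτ => ?_) ?_ ?_
  · obtain ⟨d, -, hd⟩ := hp.exists_hasDerivWithinAt τ hτ ξ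
    exact hd.continuousWithinAt
  all_goals
    intro τ hτ
    obtain ⟨d, hd, hderτ⟩ := hder τ (interior_Ici.subset hτ)
  · exact hderτ.differentiableAt.differentiableWithinAt
  · rwa [hderτ.deriv]

lemma defect_eq_zero_of_isSingularAngle (hp : IsSubsolution b p) (hb : Measurable b)
    (hb0 : ∀ x, 0 ≤ b x) {x₀ C : ℝ} (hx₀ : x₀ ∈ Icc (-1) 1) (h : IsSingularAngle b x₀)
    (ht : 0 ≤ t) (hC : ∀ ξ, 1 - p t ξ ≤ C * ‖ξ‖ ^ 2) (σ : S2) : defect (p t) ξ σ = 0 := by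
  obtain ⟨l, hl⟩ := h.exists_eq_exp hx₀ hb hb0 (hp.isRealCharFun t ht) (hp.nonneg t ht) hC
    fun ξ => (hp.integrable t ht ξ).abs.congr (.of_forall fun σ => by
      simp only [abs_mul, abs_of_nonneg (hb0 _)])
  rw [funext hl, defect_exp]

lemma lt_one_of_init_lt_one (hp : IsSubsolution b p) (hb : Measurable b) (hb0 : ∀ x, 0 ≤ b x)
    (hb1 : ∀ᶠ x in 𝓝[<] 1, 0 < b x) (hC : ∀ t ≥ 0, ∃ C, ∀ ξ, 1 - p t ξ ≤ C * ‖ξ‖ ^ 2)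
    (h : p 0 ξ₀ < 1) (ht : 0 < t) : ∀ ξ ≠ 0, p t ξ < 1 := by
  have e : S2 := ⟨EuclideanSpace.single 0 1, by simp⟩
  by_cases he : Integrable (fun σ => b (cosAngle e σ) * (1 - |cosAngle e σ|)) sphμ
  · obtain ⟨t₁, ht₁, hlt⟩ := hp.exists_lt_one_of_init_lt_one h ht
    exact hp.lt_one_of_integrable hb0 hb1 he ht₁.1 (hp.lt_one_of_lt_one hb0 hb1 ht₁.1 hlt) ht₁.2
  · obtain ⟨x₀, hx₀, hsing⟩ := exists_isSingularAngle he
    have hanti := hp.antitoneOn_of_defect_eq_zero (ξ := ξ₀) fun τ hτ σ =>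
      (hC τ (le_of_lt hτ)).elim fun C hC =>
        hp.defect_eq_zero_of_isSingularAngle hb hb0 hx₀ hsing (le_of_lt hτ) hC σ
    exact hp.lt_one_of_lt_one hb0 hb1 ht ((hanti self_mem_Ici ht.le ht.le).trans_lt h)

end IsSubsolution

end NonCollapse

section UniformNondegeneracy

variable {φ φ' : E3 → ℂ}

lemma norm_sub_le_Kdist_mul {α : ℝ} (h : KBdd α φ) (h' : KBdd α φ') {ξ : E3} (hξ : ξ ≠ 0) :
    ‖φ ξ - φ' ξ‖ ≤ Kdist α φ φ' * ‖ξ‖ ^ α := by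
  obtain ⟨C, hC⟩ := h
  obtain ⟨C', hC'⟩ := h'
  have hbdd : BddAbove (range fun η : {η : E3 // η ≠ 0} => ‖φ η - φ' η‖ / ‖(η : E3)‖ ^ α) := by
    refine ⟨C + C', ?_⟩
    rintro _ ⟨⟨η, hη⟩, rfl⟩
    refine (div_le_iff₀ (rpow_pos_of_pos (norm_pos_iff.2 hη) α)).2 ?_
    calc ‖φ η - φ' η‖ ≤ ‖φ η - 1‖ + ‖φ' η - 1‖ := by
          simpa only [sub_sub_sub_cancel_right] using norm_sub_le (φ η - 1) (φ' η - 1)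
      _ ≤ (C + C') * ‖η‖ ^ α := by
          rw [add_mul]
          exact add_le_add (hC η hη) (hC' η hη)
  exact (div_le_iff₀ (rpow_pos_of_pos (norm_pos_iff.2 hξ) α)).1 (le_ciSup hbdd ⟨ξ, hξ⟩)

lemma IsCharFn.exists_one_sub_norm_sq_le (hφ : IsCharFn φ) (h : KBdd 2 φ) :
    ∃ C, ∀ ξ, 1 - ‖φ ξ‖ ^ 2 ≤ C * ‖ξ‖ ^ 2 := by
  obtain ⟨C, hC⟩ := h
  refine ⟨2 * C, fun ξ => ?_⟩
  rcases eq_or_ne ξ 0 with rfl | hξ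
  · simp [hφ.apply_zero]
  calc 1 - ‖φ ξ‖ ^ 2 ≤ |‖φ ξ‖ ^ 2 - ‖(1 : ℂ)‖ ^ 2| := by
        rw [norm_one, one_pow, abs_sub_comm]
        exact le_abs_self _
    _ ≤ 2 * ‖φ ξ - 1‖ := abs_norm_sq_sub_le norm_one.le (hφ.norm_le_one ξ)
    _ ≤ 2 * C * ‖ξ‖ ^ 2 := by
        rw [mul_assoc, ← rpow_two]
        exact mul_le_mul_of_nonneg_left (hC ξ hξ) zero_le_two

lemma KContinuous.exists_norm_sq_le_exp {ψ : ℝ → E3 → ℂ} (hψcont : KContinuous 2 ψ)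
    (hψ : ∀ t ≥ 0, IsCharFn (ψ t)) (hψK : ∀ t ≥ 0, KBdd 2 (ψ t)) {t : ℝ} (ht : 0 < t)
    (hlt : ∀ ξ ≠ 0, ‖ψ t ξ‖ ^ 2 < 1) :
    ∃ t₀ ∈ Ico 0 t, ∃ a > 0, ∀ τ ∈ Icc t₀ t, ∀ ξ, ‖ξ‖ ≤ 1 →
      ‖ψ τ ξ‖ ^ 2 ≤ exp (-(a * ‖ξ‖ ^ 2)) := by
  obtain ⟨a, ha, hat⟩ := (hψ t ht.le).isRealCharFun_norm_sq.exists_mul_norm_sq_le hlt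
  have hev : ∀ᶠ τ in 𝓝[≤] t, 0 ≤ τ ∧ Kdist 2 (ψ τ) (ψ t) < a / 4 := by
    have hdist := (hψcont t ht.le).eventually_lt_const (show 0 < a / 4 by positivity)
    rw [nhdsWithin_eq_nhds.2 (Ici_mem_nhds ht)] at hdist
    exact ((eventually_ge_nhds ht).and hdist).filter_mono nhdsWithin_le_nhds
  obtain ⟨t₀, ht₀, hsub⟩ := mem_nhdsLE_iff_exists_Icc_subset.1 hev
  refine ⟨t₀, ⟨(hsub ⟨le_rfl, le_of_lt ht₀⟩).1, ht₀⟩, a / 2, by positivity, fun τ hτ ξ hξ => ?_⟩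
  obtain ⟨hτ0, hdist⟩ := hsub hτ
  rcases eq_or_ne ξ 0 with rfl | h0
  · simp [(hψ τ hτ0).apply_zero]
  have hclose : ‖ψ τ ξ - ψ t ξ‖ ≤ a / 4 * ‖ξ‖ ^ 2 := by
    rw [← rpow_two]
    exact (norm_sub_le_Kdist_mul (hψK τ hτ0) (hψK t ht.le) h0).trans (by gcongr)
  have hsq := abs_norm_sq_sub_le ((hψ t ht.le).norm_le_one ξ) ((hψ τ hτ0).norm_le_one ξ)
  linarith [le_abs_self (‖ψ τ ξ‖ ^ 2 - ‖ψ t ξ‖ ^ 2), hat ξ hξ,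
    add_one_le_exp (-(a / 2 * ‖ξ‖ ^ 2))]

end UniformNondegeneracy

section Kernel

lemma KernelSingular.exists_mul_rpow_le {b : ℝ → ℝ} {s K : ℝ} (h : KernelSingular b s K)
    (hs : 0 < s) (hK : 0 < K) :
    ∃ c > 0, ∀ᶠ x in 𝓝[<] 1, c * (1 - x) ^ (-(1 + s)) ≤ b x := by
  have harccos : Tendsto arccos (𝓝[<] 1) (𝓝[>] 0) := by
    refine tendsto_nhdsWithin_iff.2 ⟨?_, eventually_mem_nhdsWithin.mono fun x hx => arccos_pos.2 hx⟩
    simpa using (continuous_arccos.tendsto 1).mono_left nhdsWithin_le_nhds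
  refine ⟨K / 2 * (2 / π ^ 2) ^ (1 + s), by positivity, ?_⟩
  filter_upwards [harccos.eventually (h.eventually_const_lt (half_lt_self hK)),
    Ioo_mem_nhdsLT (show (-1 : ℝ) < 1 by norm_num)] with x hx hx1
  set θ := arccos x
  have hθ : 0 < θ := arccos_pos.2 hx1.2
  have hcos : cos θ = x := cos_arccos hx1.1.le hx1.2.le
  rw [hcos, ← mul_one_add, rpow_mul hθ.le, rpow_two] at hx
  have hquad : 2 / π ^ 2 * θ ^ 2 ≤ 1 - x := by
    have := cos_le_one_sub_mul_cos_sq (x := θ) ((abs_of_pos hθ).trans_le (arccos_le_pi x))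
    linarith
  have hb : 0 < b x := pos_of_mul_pos_left ((half_pos hK).trans hx) (by positivity)
  rw [rpow_neg (sub_nonneg.2 hx1.2.le), ← div_eq_mul_inv,
    div_le_iff₀ (rpow_pos_of_pos (sub_pos.2 hx1.2) _)]
  calc K / 2 * (2 / π ^ 2) ^ (1 + s) ≤ b x * (θ ^ 2) ^ (1 + s) * (2 / π ^ 2) ^ (1 + s) := by gcongr
    _ = b x * (2 / π ^ 2 * θ ^ 2) ^ (1 + s) := by
        rw [mul_rpow (by positivity) (by positivity), mul_right_comm, mul_assoc]
    _ ≤ b x * (1 - x) ^ (1 + s) := by gcongr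

end Kernel

section SphericalBand

open scoped Pointwise

variable {ξ : E3} {u : ℝ}

/-- The directions `σ` for which `1 - cos θ` is comparable to `u`, where `θ` is the angle between
`ξ` and `σ`. -/
def sphericalBand (ξ : E3) (u : ℝ) : Set S2 := {σ | 1 - cosAngle ξ σ ∈ Ioo (u / 8) u}

lemma measurableSet_sphericalBand : MeasurableSet (sphericalBand ξ u) :=
  (isOpen_Ioo.preimage (continuous_const.sub (continuous_cosAngle ξ))).measurableSet

lemma one_sub_div_mem_Ioo {x n q : ℝ} (hu : u ≤ 1 / 2) (hx : x ∈ Ioo (1 / 2 : ℝ) (3 / 4))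
    (hq : q ∈ Ioo (u / 4) (u / 2)) (hn : 0 < n) (hnq : n ^ 2 = x ^ 2 + q) :
    n < 1 ∧ 1 - x / n ∈ Ioo (u / 8) u := by
  obtain ⟨⟨hx1, hx2⟩, ⟨hq1, hq2⟩⟩ := And.intro hx hq
  have hu0 : 0 < u := by linarith
  have hxn : x < n := by nlinarith
  have hn1 : n < 1 := by nlinarith
  have hfactor : (n - x) * (n + x) = q := by linarith [sq_sub_sq n x]
  rw [one_sub_div hn.ne']
  refine ⟨hn1, (lt_div_iff₀ hn).2 ?_, (div_lt_iff₀ hn).2 ?_⟩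
  · nlinarith [hfactor, hu0]
  · nlinarith [hfactor, hu0]

/-- A box in the cone over the spherical band about the first coordinate axis, used to bound the
area of the band from below. -/
def bandBox (u : ℝ) : Set E3 :=
  WithLp.ofLp ⁻¹' univ.pi fun i =>
    Ioo ((![1 / 2, √u / 2, 0] : Fin 3 → ℝ) i) ((![3 / 4, 2 / 3 * √u, 1 / 5 * √u] : Fin 3 → ℝ) i)

lemma volume_bandBox (hu : 0 ≤ u) :
    (volume : Measure E3) (bandBox u) = ENNReal.ofReal (u / 120) := by
  rw [bandBox, (PiLp.volume_preserving_ofLp (Fin 3)).measure_preimage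
    (MeasurableSet.univ_pi fun i => measurableSet_Ioo).nullMeasurableSet, Real.volume_pi_Ioo,
    ← ENNReal.ofReal_prod_of_nonneg]
  · congr 1
    simp only [Fin.prod_univ_three, Matrix.cons_val]
    linear_combination (1 / 120) * mul_self_sqrt hu
  · have := sqrt_nonneg u
    intro i _
    fin_cases i <;> simp <;> linarith

lemma cosAngle_single_direction (hξ : ξ ≠ 0) :
    cosAngle (EuclideanSpace.single 0 1) (direction ξ hξ) = ξ 0 / ‖ξ‖ := by
  simp [cosAngle, direction, inner_smul_right, EuclideanSpace.inner_single_left, div_eq_inv_mul]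

lemma bandBox_subset_cone (hu : u ∈ Ioc 0 (1 / 2)) :
    bandBox u ⊆ Ioo (0 : ℝ) 1 • ((↑) '' sphericalBand (EuclideanSpace.single 0 1) u : Set E3) := by
  intro v hv
  have hsqrt := mul_self_sqrt hu.1.le
  have hpos := sqrt_pos.2 hu.1
  have h0 := hv 0 (mem_univ _)
  have h1 := hv 1 (mem_univ _)
  have h2 := hv 2 (mem_univ _)
  simp only [mem_Ioo, Matrix.cons_val] at h0 h1 h2
  have hn : 0 < ‖v‖ := norm_pos_iff.2 (by rintro rfl; norm_num at h0)
  have hq : v 1 ^ 2 + v 2 ^ 2 ∈ Ioo (u / 4) (u / 2) := by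
    have hlow : (√u / 2) ^ 2 < v 1 ^ 2 := by gcongr; exact h1.1
    have hup1 : v 1 ^ 2 < (2 / 3 * √u) ^ 2 := by gcongr <;> linarith
    have hup2 : v 2 ^ 2 < (1 / 5 * √u) ^ 2 := by gcongr <;> linarith
    constructor <;> nlinarith
  obtain ⟨hn1, hcos⟩ := one_sub_div_mem_Ioo hu.2 h0 hq hn (by
    rw [EuclideanSpace.norm_sq_eq, Fin.sum_univ_three]
    simp only [norm_eq_abs, sq_abs, add_assoc])
  have hv0 : v ≠ 0 := norm_pos_iff.1 hn
  rw [← cosAngle_single_direction hv0] at hcos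
  refine Set.mem_smul.2 ⟨‖v‖, ⟨hn, hn1⟩, direction v hv0, ⟨_, hcos, rfl⟩, norm_smul_direction hv0⟩

lemma le_measureReal_sphericalBand_single (hu : u ∈ Ioc 0 (1 / 2)) :
    u / 40 ≤ sphμ.real (sphericalBand (EuclideanSpace.single 0 1) u) := by
  rw [measureReal_def, ← ENNReal.ofReal_le_iff_le_toReal (measure_ne_top _ _), sphμ,
    Measure.toSphere_apply' _ measurableSet_sphericalBand, finrank_euclideanSpace, Fintype.card_fin]
  calc ENNReal.ofReal (u / 40) = (3 : ℕ) * volume (bandBox u) := by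
        rw [volume_bandBox hu.1.le, ← ENNReal.ofReal_natCast, ← ENNReal.ofReal_mul (by positivity)]
        congr 1
        push_cast
        ring
    _ ≤ _ := by gcongr; exact bandBox_subset_cone hu

lemma le_measureReal_sphericalBand (hξ : ξ ≠ 0) (hu : u ∈ Ioc 0 (1 / 2)) :
    u / 40 ≤ sphμ.real (sphericalBand ξ u) := by
  have he : (EuclideanSpace.single 0 1 : E3) ≠ 0 := by simp
  obtain ⟨φ, hφ, -, hcos⟩ := exists_measurePreserving_cosAngle hξ he
    ((cosAngle_self hξ).trans (cosAngle_self he).symm)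
  refine (le_measureReal_sphericalBand_single hu).trans_eq ?_
  rw [← hφ.measureReal_preimage measurableSet_sphericalBand.nullMeasurableSet]
  congr 1
  ext σ
  simp only [sphericalBand, mem_preimage, mem_ofPred_eq, hcos]

end SphericalBand

section Smoothing

variable {b : ℝ → ℝ} {s c κ : ℝ}

lemma log_one_add_le_rpow_div {y : ℝ} (hs : 0 < s) (hs1 : s ≤ 1) (hy : 0 ≤ y) :
    log (1 + y) ≤ y ^ s / s := by
  have hsub : (1 + y) ^ s ≤ 1 + y ^ s := by
    simpa only [one_rpow] using rpow_add_le_add_rpow zero_le_one hy hs.le hs1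
  rw [le_div_iff₀ hs, mul_comm, ← log_rpow (by positivity)]
  linarith [log_le_sub_one_of_pos (show 0 < (1 + y) ^ s by positivity)]

lemma exists_log_one_add_lt_rpow (hs : 0 < s) (hs1 : s ≤ 1) {a k g : ℝ} (ha : 0 < a) (hk : 0 < k)
    (hg : 0 < g) (M : ℝ) :
    ∃ δ ∈ Ioc (0 : ℝ) 1, M * δ ≤ a ∧ ∀ y > 0, k * log (1 + δ * y) < g * y ^ s := by
  have hcont : Continuous fun δ : ℝ => k * (δ ^ s / s) :=
    ((continuous_id.rpow_const fun _ => .inr hs.le).div_const s).const_mul k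
  have hlim : ∀ᶠ δ : ℝ in 𝓝[>] 0, k * (δ ^ s / s) < g :=
    (hcont.continuousWithinAt (s := Ioi 0) (x := 0)).eventually_lt_const
      (by simpa [zero_rpow hs.ne'] using hg)
  have hlin : ∀ᶠ δ : ℝ in 𝓝[>] 0, M * δ < a :=
    ((continuous_const_mul M).continuousWithinAt (s := Ioi 0) (x := 0)).eventually_lt_const
      (by simpa using ha)
  obtain ⟨δ, ⟨hδg, hδa⟩, hδ⟩ := ((hlim.and hlin).and (Ioc_mem_nhdsGT zero_lt_one)).exists
  refine ⟨δ, hδ, hδa.le, fun y hy => ?_⟩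
  calc k * log (1 + δ * y) ≤ k * ((δ * y) ^ s / s) := by
        gcongr
        exact log_one_add_le_rpow_div hs hs1 (mul_nonneg hδ.1.le hy.le)
    _ = k * (δ ^ s / s) * y ^ s := by rw [mul_rpow hδ.1.le hy.le]; ring
    _ < g * y ^ s := by gcongr

/-- The exponent of the barrier `exp (εy) (1 + δy)⁻ᵐ`, where `y` stands for `|ξ|²`. The factor
`exp (εy)` makes the barrier exceed `1` strictly at the initial time, when `m = 0`. -/
def logBarrier (m δ ε y : ℝ) : ℝ := ε * y - m * log (1 + δ * y)

lemma logBarrier_add_le {m δ : ℝ} (hm : 0 ≤ m) (hδ : 0 ≤ δ) (ε : ℝ) {y z : ℝ} (hy : 0 ≤ y)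
    (hz : 0 ≤ z) : logBarrier m δ ε y + logBarrier m δ ε z ≤ logBarrier m δ ε (y + z) := by
  have hlog : log (1 + δ * (y + z)) ≤ log (1 + δ * y) + log (1 + δ * z) := by
    rw [← log_mul (by positivity) (by positivity)]
    refine log_le_log (by positivity) ?_
    nlinarith [mul_nonneg (mul_nonneg hδ hy) (mul_nonneg hδ hz)]
  simp only [logBarrier]
  linarith [mul_le_mul_of_nonneg_left hlog hm]

lemma neg_le_logBarrier {m δ ε a y : ℝ} (hm : 0 ≤ m) (hδ : 0 ≤ δ) (ha : m * δ ≤ a) (hε : 0 ≤ ε)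
    (hy : 0 ≤ y) : -(a * y) ≤ logBarrier m δ ε y := by
  have hlog : log (1 + δ * y) ≤ δ * y := by
    linarith [log_le_sub_one_of_pos (show 0 < 1 + δ * y by positivity)]
  rw [logBarrier]
  linarith [mul_le_mul_of_nonneg_left hlog hm, mul_le_mul_of_nonneg_right ha hy, mul_nonneg hε hy]

lemma defect_le_of_le_exp {p : E3 → ℝ} {F : ℝ → ℝ} {ξ : E3} {σ : S2} {m : ℝ}
    (hF : ∀ y ≥ 0, ∀ z ≥ 0, F y + F z ≤ F (y + z)) (hp0 : ∀ η, 0 ≤ p η)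
    (hξ : p ξ = exp (F (‖ξ‖ ^ 2))) (hplus : p (xiPlus ξ σ) ≤ exp (F (‖xiPlus ξ σ‖ ^ 2)))
    (hminus : p (xiMinus ξ σ) ≤ exp (F (‖xiMinus ξ σ‖ ^ 2) - m)) :
    defect p ξ σ ≤ -((1 - exp (-m)) * p ξ) := by
  have hprod : p (xiPlus ξ σ) * p (xiMinus ξ σ) ≤ exp (-m) * p ξ :=
    calc p (xiPlus ξ σ) * p (xiMinus ξ σ)
        ≤ exp (F (‖xiPlus ξ σ‖ ^ 2)) * exp (F (‖xiMinus ξ σ‖ ^ 2) - m) := by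
          gcongr
          exact hp0 _
      _ = exp (-m) * exp (F (‖xiPlus ξ σ‖ ^ 2) + F (‖xiMinus ξ σ‖ ^ 2)) := by
          rw [← exp_add, ← exp_add]
          congr 1
          ring
      _ ≤ exp (-m) * p ξ := by
          rw [hξ, ← norm_xiPlus_sq_add ξ σ]
          gcongr
          exact hF _ (sq_nonneg _) _ (sq_nonneg _)
  rw [defect]
  linarith

lemma integral_le_of_le_on_sphericalBand {u A : ℝ} {f : S2 → ℝ} {ξ : E3} (hs : 0 ≤ 1 + s)
    (hc : 0 ≤ c) (hb0 : ∀ x, 0 ≤ b x) (hb : ∀ x ∈ Ioo (1 - u) 1, c * (1 - x) ^ (-(1 + s)) ≤ b x)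
    (hu : u ∈ Ioc 0 (1 / 2)) (hξ : ξ ≠ 0) (hA : 0 ≤ A)
    (hint : Integrable (fun σ => b (cosAngle ξ σ) * f σ) sphμ) (hf : ∀ σ, f σ ≤ 0)
    (hfA : ∀ σ ∈ sphericalBand ξ u, f σ ≤ -A) :
    ∫ σ, b (cosAngle ξ σ) * f σ ∂sphμ ≤ -(c / 40 * u ^ (-s) * A) := by
  have hu0 := hu.1
  set B := c * u ^ (-(1 + s)) * A
  have hband : ∀ σ ∈ sphericalBand ξ u, b (cosAngle ξ σ) * f σ ≤ -B := fun σ hσ => by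
    have hpos : 0 < 1 - cosAngle ξ σ := (div_pos hu0 (by norm_num)).trans hσ.1
    calc b (cosAngle ξ σ) * f σ ≤ b (cosAngle ξ σ) * -A :=
          mul_le_mul_of_nonneg_left (hfA σ hσ) (hb0 _)
      _ ≤ c * (1 - cosAngle ξ σ) ^ (-(1 + s)) * -A := mul_le_mul_of_nonpos_right
          (hb _ ⟨by linarith [hσ.2], sub_pos.1 hpos⟩) (neg_nonpos.2 hA)
      _ ≤ c * u ^ (-(1 + s)) * -A := mul_le_mul_of_nonpos_right
          (mul_le_mul_of_nonneg_left
            (rpow_le_rpow_of_nonpos hpos hσ.2.le (neg_nonpos.2 hs)) hc) (neg_nonpos.2 hA)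
      _ = -B := mul_neg _ _
  calc ∫ σ, b (cosAngle ξ σ) * f σ ∂sphμ
      ≤ ∫ σ, (sphericalBand ξ u).indicator (fun _ => -B) σ ∂sphμ := by
        refine integral_mono hint
          ((integrable_const _).indicator measurableSet_sphericalBand) fun σ => ?_
        by_cases hσ : σ ∈ sphericalBand ξ u
        · simpa only [indicator_of_mem hσ] using hband σ hσ
        · simpa only [indicator_of_notMem hσ] using
            mul_nonpos_of_nonneg_of_nonpos (hb0 _) (hf σ)
    _ = -(sphμ.real (sphericalBand ξ u) * B) := by
        rw [integral_indicator_const _ measurableSet_sphericalBand, smul_eq_mul, mul_neg]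
    _ ≤ -(u / 40 * B) := by
        gcongr
        exact le_measureReal_sphericalBand hξ hu
    _ = -(c / 40 * u ^ (-s) * A) := by
        rw [show -s = -(1 + s) + 1 by ring, rpow_add_one hu0.ne']
        simp only [B]
        ring

lemma norm_xiMinus_sq_mem_Ioo_of_mem_sphericalBand {ξ : E3} {σ : S2} (hξ : 0 < ‖ξ‖ ^ 2)
    (hσ : σ ∈ sphericalBand ξ (κ / ‖ξ‖ ^ 2)) : ‖xiMinus ξ σ‖ ^ 2 ∈ Ioo (κ / 16) (κ / 2) := by
  obtain ⟨hlow, hup⟩ := hσ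
  rw [div_right_comm, div_lt_iff₀ hξ] at hlow
  rw [lt_div_iff₀ hξ] at hup
  rw [norm_xiMinus_sq]
  constructor <;> linarith

namespace IsSubsolution

variable {p : ℝ → E3 → ℝ} {t t₀ a : ℝ}

lemma integral_defect_le (hp : IsSubsolution b p) (hb0 : ∀ x, 0 ≤ b x) (hs : 0 ≤ 1 + s)
    (hc : 0 ≤ c) (hκ : κ ∈ Ioc 0 (1 / 2))
    (hb : ∀ x ∈ Ioo (1 - κ) 1, c * (1 - x) ^ (-(1 + s)) ≤ b x) (ht : 0 ≤ t) (ha : 0 ≤ a)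
    {F : ℝ → ℝ} (hF : ∀ y ≥ 0, ∀ z ≥ 0, F y + F z ≤ F (y + z)) {ξ : E3} (hξ : 1 ≤ ‖ξ‖)
    (hle : ∀ η, ‖η‖ ≤ ‖ξ‖ → p t η ≤ exp (F (‖η‖ ^ 2)))
    (hsmall : ∀ η, ‖η‖ ≤ 1 → p t η ≤ exp (F (‖η‖ ^ 2) - a * ‖η‖ ^ 2))
    (heq : p t ξ = exp (F (‖ξ‖ ^ 2))) :
    ∫ σ, b (cosAngle ξ σ) * defect (p t) ξ σ ∂sphμ ≤
      -(c / 40 * κ ^ (-s) * (1 - exp (-(a * κ / 16))) * (‖ξ‖ ^ 2) ^ s * p t ξ) := by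
  have hx : 1 ≤ ‖ξ‖ ^ 2 := one_le_pow₀ hξ
  have hx0 : 0 < ‖ξ‖ ^ 2 := zero_lt_one.trans_le hx
  have huκ : κ / ‖ξ‖ ^ 2 ≤ κ := div_le_self hκ.1.le hx
  have hgain : 0 ≤ 1 - exp (-(a * κ / 16)) := by
    have := hκ.1
    exact sub_nonneg.2 (exp_le_one_iff.2 (neg_nonpos.2 (by positivity)))
  have hnonpos : ∀ σ, defect (p t) ξ σ ≤ 0 := fun σ => by
    simpa using defect_le_of_le_exp (m := 0) hF (hp.nonneg t ht) heq (hle _ (norm_xiPlus_le ξ σ))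
      (by simpa using hle _ (norm_xiMinus_le ξ σ))
  have hband : ∀ σ ∈ sphericalBand ξ (κ / ‖ξ‖ ^ 2),
      defect (p t) ξ σ ≤ -((1 - exp (-(a * κ / 16))) * p t ξ) := fun σ hσ => by
    obtain ⟨hlow, hup⟩ := norm_xiMinus_sq_mem_Ioo_of_mem_sphericalBand hx0 hσ
    refine defect_le_of_le_exp hF (hp.nonneg t ht) heq (hle _ (norm_xiPlus_le ξ σ))
      ((hsmall _ ?_).trans ?_)
    · exact (sq_le_one_iff₀ (norm_nonneg _)).1 (by linarith [hκ.2])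
    · rw [mul_div_assoc]
      gcongr
  refine (integral_le_of_le_on_sphericalBand hs hc hb0
    (fun x hx' => hb x ⟨by linarith [hx'.1], hx'.2⟩) ⟨div_pos hκ.1 hx0, huκ.trans hκ.2⟩
    (norm_pos_iff.1 (zero_lt_one.trans_le hξ)) (mul_nonneg hgain (hp.nonneg t ht ξ))
    (hp.integrable t ht ξ) hnonpos hband).trans_eq ?_
  rw [div_rpow hκ.1.le hx0.le, rpow_neg hx0.le, div_inv_eq_mul]
  ring

lemma exists_hasDerivAt_sub_exp_logBarrier (hp : IsSubsolution b p) (hb0 : ∀ x, 0 ≤ b x)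
    (hs : 0 ≤ 1 + s) (hc : 0 ≤ c) (hκ : κ ∈ Ioc 0 (1 / 2))
    (hb : ∀ x ∈ Ioo (1 - κ) 1, c * (1 - x) ^ (-(1 + s)) ≤ b x) (ht : 0 < t) (ha : 0 ≤ a)
    {k δ ε : ℝ} (hk : 0 ≤ k * (t - t₀)) (hδ : 0 ≤ δ)
    (hlog : ∀ y > 0, k * log (1 + δ * y) <
      c / 40 * κ ^ (-s) * (1 - exp (-(a * κ / 16))) * y ^ s) {ξ : E3} (hξ : 1 ≤ ‖ξ‖)
    (hle : ∀ η, ‖η‖ ≤ ‖ξ‖ → p t η ≤ exp (logBarrier (k * (t - t₀)) δ ε (‖η‖ ^ 2)))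
    (hsmall : ∀ η, ‖η‖ ≤ 1 →
      p t η ≤ exp (logBarrier (k * (t - t₀)) δ ε (‖η‖ ^ 2) - a * ‖η‖ ^ 2))
    (heq : p t ξ = exp (logBarrier (k * (t - t₀)) δ ε (‖ξ‖ ^ 2))) :
    ∃ d < 0, HasDerivAt (fun τ => p τ ξ - exp (logBarrier (k * (τ - t₀)) δ ε (‖ξ‖ ^ 2))) d t := by
  obtain ⟨d, hd, hder⟩ := hp.exists_hasDerivAt ht ξ
  have hbarrier := ((((((hasDerivAt_id t).sub_const t₀).const_mul k).mul_const
    (log (1 + δ * ‖ξ‖ ^ 2))).const_sub (ε * ‖ξ‖ ^ 2)).exp)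
  refine ⟨_, ?_, hder.sub hbarrier⟩
  have hloss := hp.integral_defect_le hb0 hs hc hκ hb ht.le ha
    (fun y hy z hz => logBarrier_add_le hk hδ ε hy hz) hξ hle hsmall heq
  have hx : 0 < ‖ξ‖ ^ 2 := pow_pos (zero_lt_one.trans_le hξ) 2
  have hgrow := mul_lt_mul_of_pos_right (hlog _ hx) (heq ▸ exp_pos _ : 0 < p t ξ)
  simp only [logBarrier] at heq
  rw [id_eq, ← heq]
  linarith

lemma le_exp_logBarrier (hp : IsSubsolution b p) (hb0 : ∀ x, 0 ≤ b x) (hs : 0 ≤ 1 + s)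
    (hc : 0 ≤ c) (hκ : κ ∈ Ioc 0 (1 / 2))
    (hb : ∀ x ∈ Ioo (1 - κ) 1, c * (1 - x) ^ (-(1 + s)) ≤ b x) (ht₀ : 0 ≤ t₀) (ht : t₀ ≤ t)
    (ha : 0 ≤ a) (hsmall : ∀ τ ∈ Icc t₀ t, ∀ ξ, ‖ξ‖ ≤ 1 → p τ ξ ≤ exp (-(2 * a * ‖ξ‖ ^ 2)))
    {k δ ε : ℝ} (hk : 0 ≤ k) (hδ : 0 ≤ δ) (hkδ : k * (t - t₀) * δ ≤ a)
    (hlog : ∀ y > 0, k * log (1 + δ * y) <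
      c / 40 * κ ^ (-s) * (1 - exp (-(a * κ / 16))) * y ^ s) (hε : 0 < ε) {ξ : E3} (hξ : 1 ≤ ‖ξ‖) :
    p t ξ ≤ exp (logBarrier (k * (t - t₀)) δ ε (‖ξ‖ ^ 2)) := by
  set F : ℝ → ℝ → ℝ := fun τ => logBarrier (k * (τ - t₀)) δ ε
  suffices p t ξ - exp (F t (‖ξ‖ ^ 2)) < 0 from (sub_neg.1 this).le
  refine forall_neg_of_deriv_neg_of_touch
    (K := closedBall 0 ‖ξ‖ \ ball (0 : E3) 1) (f := fun τ η => p τ η - exp (F τ (‖η‖ ^ 2)))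
    ((isCompact_closedBall 0 _).diff isOpen_ball) (t₁ := t₀) (t₂ := t) ?_ (fun η hη => ?_)
    (fun τ hτ η hη hzero hle => ?_) t ⟨ht, le_rfl⟩ ξ
    ⟨mem_closedBall_zero_iff.2 le_rfl, fun h => (mem_ball_zero_iff.1 h).not_ge hξ⟩
  · have hlogcont : Continuous fun z : ℝ × E3 => log (1 + δ * ‖z.2‖ ^ 2) :=
      Continuous.log (by fun_prop) fun z => by positivity
    simp only [F, logBarrier]
    exact (hp.continuousOn.mono (prod_mono (fun τ hτ => ht₀.trans hτ.1) (subset_univ _))).sub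
      (by fun_prop)
  · have hη1 : 1 ≤ ‖η‖ := not_lt.1 fun h => hη.2 (mem_ball_zero_iff.2 h)
    refine sub_neg.2 ((hp.le_one ht₀ η).trans_lt (one_lt_exp_iff.2 ?_))
    simp only [F, logBarrier, sub_self, mul_zero, zero_mul, sub_zero]
    positivity
  have hη1 : 1 ≤ ‖η‖ := not_lt.1 fun h => hη.2 (mem_ball_zero_iff.2 h)
  have hm : 0 ≤ k * (τ - t₀) := mul_nonneg hk (sub_nonneg.2 hτ.1.le)
  have hsmallF : ∀ ζ, ‖ζ‖ ≤ 1 → p τ ζ ≤ exp (F τ (‖ζ‖ ^ 2) - a * ‖ζ‖ ^ 2) := fun ζ hζ => by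
    have hmδ : k * (τ - t₀) * δ ≤ a := le_trans (by gcongr; exact hτ.2) hkδ
    refine (hsmall τ ⟨hτ.1.le, hτ.2⟩ ζ hζ).trans (exp_le_exp.2 ?_)
    linarith [neg_le_logBarrier hm hδ hmδ hε.le (sq_nonneg ‖ζ‖)]
  refine hp.exists_hasDerivAt_sub_exp_logBarrier hb0 hs hc hκ hb (ht₀.trans_lt hτ.1) ha hm hδ hlog
    hη1 (fun ζ hζ => ?_) hsmallF (sub_eq_zero.1 hzero)
  rcases lt_or_ge ‖ζ‖ 1 with hζ1 | hζ1
  · exact (hsmallF ζ hζ1.le).trans (exp_le_exp.2 (sub_le_self _ (by positivity)))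
  · have hζR : ζ ∈ closedBall 0 ‖ξ‖ :=
      mem_closedBall_zero_iff.2 (hζ.trans (mem_closedBall_zero_iff.1 hη.1))
    exact sub_nonpos.1 (hle ζ ⟨hζR, fun h => (mem_ball_zero_iff.1 h).not_ge hζ1⟩)

lemma exists_le_exp_log (hp : IsSubsolution b p) (hb0 : ∀ x, 0 ≤ b x) (hs : 0 < s) (hs1 : s ≤ 1)
    (hc : 0 < c) (hb : ∀ᶠ x in 𝓝[<] 1, c * (1 - x) ^ (-(1 + s)) ≤ b x) (ht₀ : 0 ≤ t₀)
    (ht : t₀ < t) (ha : 0 < a)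
    (hsmall : ∀ τ ∈ Icc t₀ t, ∀ ξ, ‖ξ‖ ≤ 1 → p τ ξ ≤ exp (-(a * ‖ξ‖ ^ 2))) {M : ℝ} (hM : 0 < M) :
    ∃ δ ∈ Ioc (0 : ℝ) 1, ∀ ξ, p t ξ ≤ exp (-(M * log (1 + δ * ‖ξ‖ ^ 2))) := by
  obtain ⟨κ, hκ, hbκ⟩ : ∃ κ ∈ Ioc (0 : ℝ) (1 / 2),
      ∀ x ∈ Ioo (1 - κ) 1, c * (1 - x) ^ (-(1 + s)) ≤ b x := by
    obtain ⟨x₁, hx₁, hbx₁⟩ := mem_nhdsLT_iff_exists_Ioo_subset.1 hb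
    refine ⟨min (1 - x₁) (1 / 2), ⟨lt_min (sub_pos.2 hx₁) (by norm_num), min_le_right _ _⟩,
      fun x hx => hbx₁ ⟨?_, hx.2⟩⟩
    linarith [hx.1, min_le_left (1 - x₁) (1 / 2)]
  have hκ0 := hκ.1
  have hlen : 0 < t - t₀ := sub_pos.2 ht
  have hgain : 0 < 1 - exp (-(a / 2 * κ / 16)) :=
    sub_pos.2 (exp_lt_one_iff.2 (neg_neg_iff_pos.2 (by positivity)))
  obtain ⟨δ, hδ, hMδ, hlog⟩ := exists_log_one_add_lt_rpow hs hs1 (a := a / 2) (by positivity)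
    (div_pos hM hlen)
    (show 0 < c / 40 * κ ^ (-s) * (1 - exp (-(a / 2 * κ / 16))) by positivity) M
  have hk : M / (t - t₀) * (t - t₀) = M := div_mul_cancel₀ M hlen.ne'
  refine ⟨δ, hδ, fun ξ => ?_⟩
  have hzero : -(M * log (1 + δ * ‖ξ‖ ^ 2)) = logBarrier M δ 0 (‖ξ‖ ^ 2) := by
    rw [logBarrier, zero_mul, zero_sub]
  rw [hzero]
  rcases le_total ‖ξ‖ 1 with hξ | hξ
  · refine (hsmall t ⟨ht.le, le_rfl⟩ ξ hξ).trans (exp_le_exp.2 ?_)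
    exact (neg_le_neg (by gcongr; exact half_le_self ha.le)).trans
      (neg_le_logBarrier hM.le hδ.1.le hMδ le_rfl (sq_nonneg ‖ξ‖))
  · have hcont : Continuous fun ε => exp (logBarrier M δ ε (‖ξ‖ ^ 2)) := by
      unfold logBarrier
      fun_prop
    refine ge_of_tendsto (hcont.continuousWithinAt (s := Ioi 0)) ?_
    filter_upwards [self_mem_nhdsWithin] with ε hε
    have hbound := hp.le_exp_logBarrier hb0 (by positivity) hc.le hκ hbκ ht₀ ht.le (half_pos ha).le
      (by simpa only [mul_div_cancel₀ a two_ne_zero] using hsmall) (div_pos hM hlen).le hδ.1.le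
      (hk.symm ▸ hMδ) hlog hε hξ
    rwa [hk] at hbound

end IsSubsolution

end Smoothing

section Integral

lemma lintegral_lt_top_of_le_exp_log {p : E3 → ℝ} {δ : ℝ} (hδ : δ ∈ Ioc (0 : ℝ) 1) (N : ℕ)
    (h : ∀ ξ, p ξ ≤ exp (-((N + 2) * log (1 + δ * ‖ξ‖ ^ 2)))) :
    ∫⁻ ξ, ENNReal.ofReal ((1 + ‖ξ‖ ^ 2) ^ N * p ξ) < ⊤ := by
  have hδ0 := hδ.1
  have hint : Integrable fun ξ : E3 => (1 + ‖ξ‖ ^ 2) ^ (-(4 : ℝ) / 2) :=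
    integrable_rpow_neg_one_add_norm_sq (by simp only [finrank_euclideanSpace_fin]; norm_num)
  refine (lintegral_mono fun ξ => ENNReal.ofReal_le_ofReal ?_).trans_lt
    (hint.const_mul (δ⁻¹ ^ (N + 2))).lintegral_lt_top
  have hpow : exp (-((N + 2) * log (1 + δ * ‖ξ‖ ^ 2))) = ((1 + δ * ‖ξ‖ ^ 2) ^ (N + 2))⁻¹ := by
    rw [exp_neg, ← Nat.cast_ofNat, ← Nat.cast_add, exp_nat_mul, exp_log (by positivity)]
  have hδx : δ * (1 + ‖ξ‖ ^ 2) ≤ 1 + δ * ‖ξ‖ ^ 2 := by linarith [hδ.2]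
  calc (1 + ‖ξ‖ ^ 2) ^ N * p ξ
      ≤ (1 + ‖ξ‖ ^ 2) ^ N * ((δ * (1 + ‖ξ‖ ^ 2)) ^ (N + 2))⁻¹ := by
        gcongr
        exact (h ξ).trans (hpow.trans_le (by gcongr))
    _ = δ⁻¹ ^ (N + 2) * ((1 + ‖ξ‖ ^ 2) ^ 2)⁻¹ := by
        rw [mul_pow, mul_inv, inv_pow, pow_add (1 + ‖ξ‖ ^ 2)]
        field_simp
    _ = δ⁻¹ ^ (N + 2) * (1 + ‖ξ‖ ^ 2) ^ (-(4 : ℝ) / 2) := by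
        rw [show -(4 : ℝ) / 2 = -2 by norm_num, rpow_neg (by positivity), rpow_two]

end Integral

section Main

variable {b : ℝ → ℝ} {s c : ℝ}

lemma eventually_mul_rpow_min_le (hc : 0 ≤ c)
    (hb : ∀ᶠ x in 𝓝[<] 1, c * (1 - x) ^ (-(1 + s)) ≤ b x) (r : ℝ) :
    ∀ᶠ x in 𝓝[<] 1, c * (1 - x) ^ (-(1 + min s r)) ≤ b x := by
  filter_upwards [hb, Ioo_mem_nhdsLT (zero_lt_one' ℝ)] with x hbx hx
  refine (mul_le_mul_of_nonneg_left ?_ hc).trans hbx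
  exact rpow_le_rpow_of_exponent_ge (sub_pos.2 hx.2) (sub_le_self 1 hx.1.le)
    (neg_le_neg (add_le_add_right (min_le_left s r) 1))

lemma eventually_pos_of_mul_rpow_le (hc : 0 < c)
    (hb : ∀ᶠ x in 𝓝[<] 1, c * (1 - x) ^ (-(1 + s)) ≤ b x) : ∀ᶠ x in 𝓝[<] 1, 0 < b x := by
  filter_upwards [hb, self_mem_nhdsWithin] with x hbx hx
  exact (mul_pos hc (rpow_pos_of_pos (sub_pos.2 hx) _)).trans_le hbx

lemma exists_norm_charFn_sq_lt_one (F : Measure E3) [IsProbabilityMeasure F]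
    (hF : ∀ v, F {v} ≠ 1) : ∃ ξ, ‖charFn F ξ‖ ^ 2 < 1 := by
  by_contra! h
  have hchar : IsCharFn (charFn F) := ⟨F, inferInstance, rfl⟩
  obtain ⟨v, hv⟩ := exists_singleton_of_norm_charFn_eq_one F fun ξ =>
    (hchar.norm_le_one ξ).antisymm ((one_le_sq_iff₀ (norm_nonneg _)).1 (h ξ))
  exact hF v hv

end Main

theorem villani_smoothing_global_energy_general
    {s c : ℝ} (hs : 0 < s) (hc : 0 < c)
    {b : ℝ → ℝ} (hb_meas : Measurable b) (hb_nonneg : ∀ x, 0 ≤ b x)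
    (hb_sing : ∀ᶠ x in 𝓝[<] 1, c * (1 - x) ^ (-(1 + s)) ≤ b x)
    {F₀ : Measure E3} [IsProbabilityMeasure F₀] (hnotdirac : ∀ v₀ : E3, F₀ {v₀} ≠ 1)
    {ψ : ℝ → E3 → ℂ} (hψ : IsBobylevSolution b ψ (charFn F₀))
    (hψK : ∀ t ≥ 0, KBdd 2 (ψ t)) (hψcont : KContinuous 2 ψ) {t : ℝ} (ht : 0 < t) (N : ℕ) :
    ∫⁻ ξ : E3, ENNReal.ofReal ((1 + ‖ξ‖ ^ 2) ^ N * ‖ψ t ξ‖ ^ 2) < ⊤ := by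
  have hp := hψ.isSubsolution_norm_sq hb_meas hb_nonneg
  obtain ⟨ξ₀, hξ₀⟩ : ∃ ξ, ‖ψ 0 ξ‖ ^ 2 < 1 := hψ.init ▸ exists_norm_charFn_sq_lt_one F₀ hnotdirac
  have hlt : ∀ ξ ≠ 0, ‖ψ t ξ‖ ^ 2 < 1 :=
    hp.lt_one_of_init_lt_one hb_meas hb_nonneg (eventually_pos_of_mul_rpow_le hc hb_sing)
      (fun τ hτ => (hψ.isCharFn τ hτ).exists_one_sub_norm_sq_le (hψK τ hτ)) hξ₀ ht
  obtain ⟨t₀, ht₀, a, ha, hsmall⟩ := hψcont.exists_norm_sq_le_exp hψ.isCharFn hψK ht hlt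
  obtain ⟨δ, hδ, hlog⟩ := hp.exists_le_exp_log hb_nonneg (lt_min hs one_pos) (min_le_right s 1) hc
    (eventually_mul_rpow_min_le hc.le hb_sing 1) ht₀.1 ht₀.2 ha hsmall (M := N + 2) (by positivity)
  exact lintegral_lt_top_of_le_exp_log hδ N hlog

/-- global-in-time H^∞ smoothing for non-Dirac initial data with
finite second moment. -/
theorem villani_smoothing_global_energy
    (s K : ℝ) (hs0 : 0 < s) (hs1 : s < 1) (hK : 0 < K)
    (b : ℝ → ℝ) (hb_meas : Measurable b) (hb_nonneg : ∀ x, 0 ≤ b x)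
    (hb_sing : KernelSingular b s K)
    (F₀ : Measure E3) [IsProbabilityMeasure F₀]
    (hnotdirac : ∀ v₀ : E3, F₀ {v₀} ≠ 1)
    (hmom2 : (∫⁻ v, ENNReal.ofReal (‖v‖ ^ 2) ∂F₀) < ⊤)
    (ψ₀ : E3 → ℂ) (hψ₀ : ψ₀ = charFn F₀)
    (ψ : ℝ → E3 → ℂ) (hψ : IsBobylevSolution b ψ ψ₀)
    (hψK : ∀ t ≥ 0, KBdd 2 (ψ t)) (hψcont : KContinuous 2 ψ) :
    ∀ t > (0:ℝ), ∀ N : ℕ,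
      (∫⁻ ξ : E3, ENNReal.ofReal ((1 + ‖ξ‖ ^ 2) ^ N * ‖ψ t ξ‖ ^ 2)) < ⊤ := by
  obtain ⟨c, hc, hb⟩ := hb_sing.exists_mul_rpow_le hs0 hK
  subst hψ₀
  exact fun t ht N => villani_smoothing_global_energy_general hs0 hc hb_meas hb_nonneg hb hnotdirac
    hψ hψK hψcont ht N
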